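/- Let α ∈ (1,2) and let X = {X(t)}_{t∈[0,1]} be a symmetric α-stable process with spectral representation (f,m) over a finite measure space (S,𝒮,m). Assume there exist β_1, β_2 > 1/2, p_1 > α, p_2 > α/2 and increasing continuous functions F_1, F_2 : [0,1] → ℝ such that for all 0 ≤ t_1 ≤ t ≤ t_2 ≤ 1: ∫_S |f(t_2,s) − f(t_1,s)|^{p_1} m(ds) ≤ |F_1(t_2) − F_1(t_1)|^{β_1} and ∫_S |(f(t,s) − f(t_1,s))(f(t_2,s) − f(t,s))|^{p_2} m(ds) ≤ |F_2(t_2) − F_2(t_1)|^{2β_2}. Then X has a modification all of whose sample paths are càdlàg on [0,1]. -/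

import Mathlib

open MeasureTheory ProbabilityTheory Filter Topology Set
open scoped ENNReal

noncomputable section

/-- A function on `[0,1]` is càdlàg: right-continuous with left limits at every point. -/
def Cadlag {E : Type*} [TopologicalSpace E] (f : unitInterval → E) : Prop :=
  (∀ t, Filter.Tendsto f (nhdsWithin t (Set.Ioi t)) (nhds (f t))) ∧
    ∀ t, ∃ l, Filter.Tendsto f (nhdsWithin t (Set.Iio t)) (nhds l)

def dy (n k : ℕ) : unitInterval := Set.projIcc (0:ℝ) 1 zero_le_one ((k:ℝ)/2^n)

def dyD : Set unitInterval := {d | ∃ n k : ℕ, (d : ℝ) = (k:ℝ)/2^n}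

lemma dy_coe {n k : ℕ} (h : k ≤ 2^n) : (dy n k : ℝ) = (k:ℝ)/2^n := by
  unfold dy
  rw [Set.projIcc_of_mem zero_le_one]
  constructor
  · positivity
  · rw [div_le_one (by positivity)]
    exact_mod_cast h

lemma dy_two (n k : ℕ) : dy (n+1) (2*k) = dy n k := by
  unfold dy
  congr 1
  push_cast
  rw [pow_succ]
  field_simp

lemma dy_top {n k : ℕ} (h : 2^n ≤ k) : dy n k = 1 := by
  unfold dy
  have : (1:ℝ) ≤ (k:ℝ)/2^n := by
    rw [le_div_iff₀ (by positivity), one_mul]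
    exact_mod_cast h
  rw [Set.projIcc_of_right_le zero_le_one this]
  rfl

lemma dy_mem (n k : ℕ) : dy n k ∈ dyD := by
  rcases le_total k (2^n) with h | h
  · exact ⟨n, k, dy_coe h⟩
  · rw [dy_top h]; exact ⟨0, 1, by simp⟩

lemma dy_mul_pow (n k p : ℕ) : dy (n+p) (k*2^p) = dy n k := by
  unfold dy
  congr 1
  push_cast
  rw [pow_add]
  field_simp

/-- chaining -/
lemma chain (x : ℕ → ℕ → ℝ) (hx : ∀ n k, x (n+1) (2*k) = x n k) (lam : ℕ → ℝ)
    (hl : ∀ n, 0 ≤ lam n) (n0 : ℕ)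
    (h : ∀ n, n0 ≤ n → ∀ k, |x (n+1) (2*k+1) - x (n+1) (2*k)| ≤ lam n ∨
      |x (n+1) (2*k+2) - x (n+1) (2*k+1)| ≤ lam n) (a : ℕ) :
    ∀ p i j k : ℕ, i ≤ j → j ≤ k → a * 2^p ≤ i → k ≤ (a+1) * 2^p →
      |x (n0+p) j - x (n0+p) i| ≤ 2 * ∑ l ∈ Finset.range p, lam (n0+l) ∨
      |x (n0+p) k - x (n0+p) j| ≤ 2 * ∑ l ∈ Finset.range p, lam (n0+l) := by
  intro p
  induction p with
  | zero =>
    intro i j k hij hjk hi hk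
    simp only [pow_zero, mul_one] at hi hk
    rcases (show j = i ∨ k = j by omega) with h | h <;> simp [h]
  | succ p ih =>
    intro i j k hij hjk hi hk
    -- the monotone projection
    have proj : ∀ i, ∃ i', |x (n0+(p+1)) i - x (n0+p) i'| ≤ lam (n0+p) ∧
        ((i = 2*i') ∨ (i+1 = 2*i') ∨ (i = 2*i'+1)) := by
      intro i
      rcases Nat.even_or_odd' i with ⟨c, rfl | rfl⟩
      · refine ⟨c, ?_, Or.inl rfl⟩
        rw [← add_assoc, hx]; simpa using hl _
      · rcases h (n0+p) (by omega) c with h1 | h1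
        · refine ⟨c, ?_, by omega⟩
          rw [← hx (n0+p) c]; exact h1
        · refine ⟨c+1, ?_, by omega⟩
          rw [← hx (n0+p) (c+1), abs_sub_comm]; exact h1
    obtain ⟨i', hi1, hi2⟩ := proj i
    obtain ⟨j', hj1, hj2⟩ := proj j
    obtain ⟨k', hk1, hk2⟩ := proj k
    by_cases hij' : i = j
    · left; subst hij'
      simp only [sub_self, abs_zero]
      exact mul_nonneg (by norm_num) (Finset.sum_nonneg fun _ _ => hl _)
    by_cases hjk' : j = k
    · right; subst hjk'
      simp only [sub_self, abs_zero]
      exact mul_nonneg (by norm_num) (Finset.sum_nonneg fun _ _ => hl _)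
    rw [pow_succ] at hi hk
    have hi' : a * 2^p ≤ i' := by
      have : 2 * (a * 2^p) ≤ i := by linarith
      omega
    have hk' : k' ≤ (a+1) * 2^p := by
      have : k ≤ 2 * ((a+1) * 2^p) := by linarith
      omega
    rw [Finset.sum_range_succ]
    rcases ih i' j' k' (by omega) (by omega) hi' hk' with h1 | h1
    · left
      rw [abs_le] at *
      constructor <;> linarith [hi1.1, hi1.2, hj1.1, hj1.2, h1.1, h1.2]
    · right
      rw [abs_le] at *
      constructor <;> linarith [hk1.1, hk1.2, hj1.1, hj1.2, h1.1, h1.2]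

lemma dyD_level {d : unitInterval} (h : d ∈ dyD) : ∃ n, ∀ p, n ≤ p → ∃ k : ℕ,
    (d : ℝ) = (k:ℝ)/2^p ∧ dy p k = d := by
  obtain ⟨n, k, h⟩ := h
  refine ⟨n, fun p hp => ?_⟩
  obtain ⟨q, rfl⟩ := Nat.exists_eq_add_of_le hp
  refine ⟨k * 2^q, ?_, ?_⟩
  · rw [h]; push_cast; rw [pow_add]; field_simp
  · rw [dy_mul_pow]
    unfold dy
    rw [← h]
    exact Set.projIcc_val zero_le_one d

lemma triple (x : unitInterval → ℝ) (lam : ℕ → ℝ) (hl : ∀ n, 0 ≤ lam n) (hs : Summable lam)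
    (n0 : ℕ)
    (h : ∀ n, n0 ≤ n → ∀ k, |x (dy (n+1) (2*k+1)) - x (dy (n+1) (2*k))| ≤ lam n ∨
      |x (dy (n+1) (2*k+2)) - x (dy (n+1) (2*k+1))| ≤ lam n) (η : ℝ) (hη : 0 < η) :
    ∃ n : ℕ, ∀ a : ℕ, ∀ r ∈ dyD, ∀ s ∈ dyD, ∀ t ∈ dyD, r ≤ s → s ≤ t →
      (a:ℝ)/2^n ≤ (r:ℝ) → (t:ℝ) ≤ (a+1:ℝ)/2^n → |x s - x r| ≤ η ∨ |x t - x s| ≤ η := by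
  have htail : Tendsto (fun n => ∑' l, lam (l + n)) atTop (𝓝 0) := tendsto_sum_nat_add lam
  obtain ⟨n, hn0, hn⟩ : ∃ n, n0 ≤ n ∧ ∑' l, lam (l + n) < η/2 := by
    have := (htail.eventually (gt_mem_nhds (half_pos hη))).and (eventually_ge_atTop n0)
    obtain ⟨n, h1, h2⟩ := this.exists
    exact ⟨n, h2, h1⟩
  refine ⟨n, fun a r hr s hs' t ht hrs hst har hta => ?_⟩
  obtain ⟨nr, hr⟩ := dyD_level hr
  obtain ⟨ns, hs'⟩ := dyD_level hs'
  obtain ⟨nt, ht⟩ := dyD_level ht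
  obtain ⟨i, hi, hi'⟩ := hr (n + (nr+ns+nt)) (by omega)
  obtain ⟨j, hj, hj'⟩ := hs' (n + (nr+ns+nt)) (by omega)
  obtain ⟨k, hk, hk'⟩ := ht (n + (nr+ns+nt)) (by omega)
  set p := nr+ns+nt
  have hsum : 2 * ∑ l ∈ Finset.range p, lam (n+l) ≤ η := by
    have : ∑ l ∈ Finset.range p, lam (n+l) ≤ ∑' l, lam (l + n) := by
      simp_rw [add_comm n]
      exact Summable.sum_le_tsum _ (fun _ _ => hl _) ((summable_nat_add_iff n).2 hs)
    linarith
  have key := chain (fun n k => x (dy n k)) (fun n k => by simp only [dy_two]) lam hl n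
    (fun q hq => h q (hn0.trans hq)) a p i j k ?_ ?_ ?_ ?_
  · simp only [hi', hj', hk'] at key
    exact key.imp (fun h => h.trans hsum) (fun h => h.trans hsum)
  · have : (r:ℝ) ≤ s := hrs
    rw [hi, hj, div_le_div_iff_of_pos_right (by positivity)] at this
    exact_mod_cast this
  · have : (s:ℝ) ≤ t := hst
    rw [hj, hk, div_le_div_iff_of_pos_right (by positivity)] at this
    exact_mod_cast this
  · rw [hi, pow_add, div_le_div_iff₀ (by positivity) (by positivity)] at har
    have h2 : (a:ℝ) * 2^p ≤ i := by
      have : (0:ℝ) < 2^n := by positivity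
      nlinarith
    exact_mod_cast h2
  · rw [hk, pow_add, div_le_div_iff₀ (by positivity) (by positivity)] at hta
    have h2 : (k:ℝ) ≤ (a+1) * 2^p := by
      have : (0:ℝ) < 2^n := by positivity
      nlinarith
    exact_mod_cast h2

lemma right_lim (x : unitInterval → ℝ)
    (H : ∀ η > 0, ∃ n : ℕ, ∀ a : ℕ, ∀ r ∈ dyD, ∀ s ∈ dyD, ∀ t ∈ dyD, r ≤ s → s ≤ t →
      (a:ℝ)/2^n ≤ (r:ℝ) → (t:ℝ) ≤ (a+1:ℝ)/2^n → |x s - x r| ≤ η ∨ |x t - x s| ≤ η)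
    (t : unitInterval) : ∃ l, Tendsto x (𝓝[dyD ∩ Ioi t] t) (𝓝 l) := by
  by_cases hb : 𝓝[dyD ∩ Ioi t] t = ⊥
  · exact ⟨0, by simp [hb]⟩
  have : NeBot (𝓝[dyD ∩ Ioi t] t) := ⟨hb⟩
  have hself : dyD ∩ Ioi t ∈ 𝓝[dyD ∩ Ioi t] t := self_mem_nhdsWithin
  rw [← cauchy_map_iff_exists_tendsto]
  rw [Metric.cauchy_iff]
  refine ⟨inferInstance, fun ε hε => ?_⟩
  obtain ⟨n, hn⟩ := H (ε/3) (by positivity)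
  set a := ⌊(t:ℝ) * 2^n⌋₊
  have hpos : (0:ℝ) < 2^n := by positivity
  have ha1 : (a:ℝ)/2^n ≤ t := by
    rw [div_le_iff₀ hpos]; exact Nat.floor_le (mul_nonneg t.2.1 hpos.le)
  have ha2 : (t:ℝ) < (a+1:ℝ)/2^n := by
    rw [lt_div_iff₀ hpos]; exact Nat.lt_floor_add_one _
  have hW : {u : unitInterval | (u:ℝ) < (a+1:ℝ)/2^n} ∈ 𝓝[dyD ∩ Ioi t] t :=
    mem_nhdsWithin_of_mem_nhds ((isOpen_lt continuous_subtype_val continuous_const).mem_nhds ha2)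
  by_contra hcon
  push Not at hcon
  have step : ∀ V ∈ 𝓝[dyD ∩ Ioi t] t, ∃ c d, c ∈ V ∧ d ∈ V ∧ c ∈ dyD ∩ Ioi t ∧
      d ∈ dyD ∩ Ioi t ∧ (c:ℝ) < (a+1:ℝ)/2^n ∧ (d:ℝ) < (a+1:ℝ)/2^n ∧ c ≤ d ∧
      ε ≤ |x d - x c| := by
    intro V hV
    obtain ⟨y, hy, z, hz, hyz⟩ := hcon (x '' (V ∩ (dyD ∩ Ioi t) ∩ {u | (u:ℝ) < (a+1:ℝ)/2^n}))
      (image_mem_map (inter_mem (inter_mem hV hself) hW))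
    obtain ⟨c, ⟨⟨h1, h2⟩, h3⟩, rfl⟩ := hy
    obtain ⟨d, ⟨⟨h4, h5⟩, h6⟩, rfl⟩ := hz
    rw [Real.dist_eq] at hyz
    rcases le_total c d with h | h
    · exact ⟨c, d, h1, h4, h2, h5, h3, h6, h, by rwa [abs_sub_comm]⟩
    · exact ⟨d, c, h4, h1, h5, h2, h6, h3, h, hyz⟩
  obtain ⟨c1, d1, -, -, hc1, hd1, hc1', hd1', hcd1, hx1⟩ := step univ univ_mem
  obtain ⟨c2, d2, hc2V, hd2V, hc2, hd2, hc2', hd2', hcd2, hx2⟩ := step (Iio c1)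
    (mem_nhdsWithin_of_mem_nhds (Iio_mem_nhds hc1.2))
  have hd2c1 : d2 ≤ c1 := le_of_lt hd2V
  have hr : (a:ℝ)/2^n ≤ c2 := ha1.trans (le_of_lt hc2.2)
  have e1 := hn a c2 hc2.1 d2 hd2.1 d1 hd1.1 hcd2 (hd2c1.trans hcd1) hr hd1'.le
  have e2 := hn a c2 hc2.1 d2 hd2.1 c1 hc1.1 hcd2 hd2c1 hr hc1'.le
  have n1 : ¬ |x d2 - x c2| ≤ ε/3 := by linarith
  have e1 := e1.resolve_left n1
  have e2 := e2.resolve_left n1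
  have : |x d1 - x c1| ≤ |x d1 - x d2| + |x c1 - x d2| := by
    have := abs_sub (x d1 - x d2) (x c1 - x d2)
    rwa [sub_sub_sub_cancel_right] at this
  linarith

lemma left_lim (x : unitInterval → ℝ)
    (H : ∀ η > 0, ∃ n : ℕ, ∀ a : ℕ, ∀ r ∈ dyD, ∀ s ∈ dyD, ∀ t ∈ dyD, r ≤ s → s ≤ t →
      (a:ℝ)/2^n ≤ (r:ℝ) → (t:ℝ) ≤ (a+1:ℝ)/2^n → |x s - x r| ≤ η ∨ |x t - x s| ≤ η)
    (t : unitInterval) : ∃ l, Tendsto x (𝓝[dyD ∩ Iio t] t) (𝓝 l) := by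
  by_cases hb : 𝓝[dyD ∩ Iio t] t = ⊥
  · exact ⟨0, by simp [hb]⟩
  have : NeBot (𝓝[dyD ∩ Iio t] t) := ⟨hb⟩
  have hself : dyD ∩ Iio t ∈ 𝓝[dyD ∩ Iio t] t := self_mem_nhdsWithin
  have ht0 : (0:ℝ) < t := by
    obtain ⟨y, hy⟩ := Filter.nonempty_of_mem hself
    exact lt_of_le_of_lt y.2.1 hy.2
  rw [← cauchy_map_iff_exists_tendsto]
  rw [Metric.cauchy_iff]
  refine ⟨inferInstance, fun ε hε => ?_⟩
  obtain ⟨n, hn⟩ := H (ε/3) (by positivity)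
  have hpos : (0:ℝ) < 2^n := by positivity
  obtain ⟨a, ha⟩ : ∃ a, ⌈(t:ℝ) * 2^n⌉₊ = a + 1 :=
    Nat.exists_eq_succ_of_ne_zero (Nat.ceil_pos.2 (by positivity)).ne'
  have ha1 : (a:ℝ)/2^n < t := by
    rw [div_lt_iff₀ hpos]
    exact Nat.lt_ceil.1 (by omega)
  have ha2 : (t:ℝ) ≤ (a+1:ℝ)/2^n := by
    rw [le_div_iff₀ hpos]
    have := Nat.le_ceil ((t:ℝ) * 2^n)
    rw [ha] at this; exact_mod_cast this
  have hW : {u : unitInterval | (a:ℝ)/2^n < (u:ℝ)} ∈ 𝓝[dyD ∩ Iio t] t :=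
    mem_nhdsWithin_of_mem_nhds ((isOpen_lt continuous_const continuous_subtype_val).mem_nhds ha1)
  by_contra hcon
  push Not at hcon
  have step : ∀ V ∈ 𝓝[dyD ∩ Iio t] t, ∃ c d, c ∈ V ∧ d ∈ V ∧ c ∈ dyD ∩ Iio t ∧
      d ∈ dyD ∩ Iio t ∧ (a:ℝ)/2^n < (c:ℝ) ∧ (a:ℝ)/2^n < (d:ℝ) ∧ c ≤ d ∧
      ε ≤ |x d - x c| := by
    intro V hV
    obtain ⟨y, hy, z, hz, hyz⟩ := hcon (x '' (V ∩ (dyD ∩ Iio t) ∩ {u | (a:ℝ)/2^n < (u:ℝ)}))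
      (image_mem_map (inter_mem (inter_mem hV hself) hW))
    obtain ⟨c, ⟨⟨h1, h2⟩, h3⟩, rfl⟩ := hy
    obtain ⟨d, ⟨⟨h4, h5⟩, h6⟩, rfl⟩ := hz
    rw [Real.dist_eq] at hyz
    rcases le_total c d with h | h
    · exact ⟨c, d, h1, h4, h2, h5, h3, h6, h, by rwa [abs_sub_comm]⟩
    · exact ⟨d, c, h4, h1, h5, h2, h6, h3, h, hyz⟩
  obtain ⟨c1, d1, -, -, hc1, hd1, hc1', hd1', hcd1, hx1⟩ := step univ univ_mem
  obtain ⟨c2, d2, hc2V, hd2V, hc2, hd2, hc2', hd2', hcd2, hx2⟩ := step (Ioi d1)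
    (mem_nhdsWithin_of_mem_nhds (Ioi_mem_nhds hd1.2))
  have hdc : d1 ≤ c2 := le_of_lt hc2V
  have hr : (d2:ℝ) ≤ (a+1:ℝ)/2^n := (le_of_lt (show (d2:ℝ) < t from hd2.2)).trans ha2
  have e1 := hn a c1 hc1.1 c2 hc2.1 d2 hd2.1 (hcd1.trans hdc) hcd2 hc1'.le hr
  have e2 := hn a d1 hd1.1 c2 hc2.1 d2 hd2.1 hdc hcd2 hd1'.le hr
  have n1 : ¬ |x d2 - x c2| ≤ ε/3 := by linarith
  have e1 := e1.resolve_right n1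
  have e2 := e2.resolve_right n1
  have : |x d1 - x c1| ≤ |x c2 - x c1| + |x c2 - x d1| := by
    have := abs_sub (x c2 - x c1) (x c2 - x d1)
    rwa [sub_sub_sub_cancel_left] at this
  linarith

lemma dyD_neBot {t : unitInterval} (ht : t < 1) : NeBot (𝓝[dyD ∩ Ioi t] t) := by
  rw [← mem_closure_iff_nhdsWithin_neBot, Metric.mem_closure_iff]
  intro ε hε
  have ht' : (t:ℝ) < 1 := ht
  obtain ⟨n, hn⟩ := exists_pow_lt_of_lt_one hε (show (1/2:ℝ) < 1 by norm_num)
  have hpos : (0:ℝ) < 2^n := by positivity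
  have hn' : 1/2^n < ε := by rwa [one_div, inv_pow, ← one_div] at hn
  set a := ⌊(t:ℝ) * 2^n⌋₊
  have ha1 : (a:ℝ) ≤ t * 2^n := Nat.floor_le (mul_nonneg t.2.1 hpos.le)
  have ha2 : (t:ℝ) * 2^n < a+1 := Nat.lt_floor_add_one _
  have hle : a + 1 ≤ 2^n := by
    have : (a:ℝ) < 2^n := by nlinarith
    exact_mod_cast this
  have hc := dy_coe hle
  push_cast at hc
  have h1 : (t:ℝ) < dy n (a+1) := by rw [hc, lt_div_iff₀ hpos]; exact ha2
  refine ⟨dy n (a+1), ⟨dy_mem _ _, h1⟩, ?_⟩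
  rw [dist_comm, Subtype.dist_eq, Real.dist_eq, abs_of_pos (by linarith), hc]
  have : ((a:ℝ)+1)/2^n ≤ t + 1/2^n := by
    rw [add_div]
    have : (a:ℝ)/2^n ≤ t := by rwa [div_le_iff₀ hpos]
    linarith
  linarith

lemma cadlag_ext (x : unitInterval → ℝ) (lam : ℕ → ℝ) (hl : ∀ n, 0 ≤ lam n) (hs : Summable lam)
    (n0 : ℕ)
    (h : ∀ n, n0 ≤ n → ∀ k, |x (dy (n+1) (2*k+1)) - x (dy (n+1) (2*k))| ≤ lam n ∨
      |x (dy (n+1) (2*k+2)) - x (dy (n+1) (2*k+1))| ≤ lam n) :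
    ∃ y : unitInterval → ℝ, Cadlag y ∧ y 1 = x 1 ∧
      ∀ t < 1, Tendsto x (𝓝[dyD ∩ Ioi t] t) (𝓝 (y t)) := by
  have H := triple x lam hl hs n0 h
  choose R hR using right_lim x H
  choose L hL using left_lim x H
  set y : unitInterval → ℝ := fun t => if t = 1 then x 1 else R t with hy
  have hyR : ∀ t < 1, Tendsto x (𝓝[dyD ∩ Ioi t] t) (𝓝 (y t)) := by
    intro t ht
    simp only [hy, ht.ne, if_false]; exact hR t
  have hone : (1 : unitInterval) ∈ dyD := ⟨0, 1, by simp⟩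
  have key : ∀ (O : Set unitInterval) (C : Set ℝ), IsOpen O → IsClosed C →
      (∀ d ∈ dyD ∩ O, x d ∈ C) → ∀ u ∈ O, y u ∈ C := by
    intro O C hO hC hd u hu
    rcases eq_or_lt_of_le (show u ≤ 1 from u.2.2) with rfl | hu1
    · simp only [hy, if_true]; exact hd _ ⟨hone, hu⟩
    · have := dyD_neBot hu1
      refine hC.mem_of_tendsto (hyR u hu1) ?_
      filter_upwards [self_mem_nhdsWithin, mem_nhdsWithin_of_mem_nhds (hO.mem_nhds hu)] with d h1 h2
      exact hd d ⟨h1.1, h2⟩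
  have key2 : ∀ (t : unitInterval) (I : Set unitInterval) (l : ℝ), IsOpen I →
      Tendsto x (𝓝[dyD ∩ I] t) (𝓝 l) → Tendsto y (𝓝[I] t) (𝓝 l) := by
    intro t I l hI hx
    rw [Metric.tendsto_nhds]
    intro ε hε
    have := hx (Metric.closedBall_mem_nhds l (half_pos hε))
    rw [mem_map, mem_nhdsWithin] at this
    obtain ⟨O, hO, htO, hsub⟩ := this
    have := key (O ∩ I) (Metric.closedBall l (ε/2)) (hO.inter hI) Metric.isClosed_closedBall
      (fun d hd => hsub ⟨hd.2.1, hd.1, hd.2.2⟩)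
    filter_upwards [self_mem_nhdsWithin, mem_nhdsWithin_of_mem_nhds (hO.mem_nhds htO)] with u h1 h2
    have h3 := this u ⟨h2, h1⟩
    rw [Metric.mem_closedBall] at h3
    linarith
  refine ⟨y, ⟨fun t => ?_, fun t => ⟨L t, key2 t _ _ isOpen_Iio (hL t)⟩⟩, by simp [hy], hyR⟩
  rcases eq_or_lt_of_le (show t ≤ 1 from t.2.2) with rfl | ht
  · have : Ioi (1:unitInterval) = ∅ := by
      ext u; simp only [mem_Ioi, mem_empty_iff_false, iff_false, not_lt]; exact u.2.2
    simp [this]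
  · exact key2 t _ _ isOpen_Ioi (hyR t ht)

lemma pi_exists_le {E : Type*} [MeasurableSpace E] (ν : Measure E) [IsProbabilityMeasure ν]
    (Λ : Measure E) (N : ℕ) (hΛ : (N : ℝ≥0∞) • ν ≤ Λ) {A : Set E} (hA : MeasurableSet A) :
    Measure.pi (fun _ : Fin N => ν) {e | ∃ j, e j ∈ A} ≤ Λ A := by
  have : {e : Fin N → E | ∃ j, e j ∈ A} = ⋃ j, (Function.eval j) ⁻¹' A := by
    ext e; simp
  rw [this]
  refine (measure_iUnion_fintype_le _ _).trans ?_
  have h : ∀ j : Fin N, Measure.pi (fun _ : Fin N => ν) (Function.eval j ⁻¹' A) = ν A := fun j =>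
    (measurePreserving_eval (fun _ : Fin N => ν) j).measure_preimage hA.nullMeasurableSet
  simp only [h, Finset.sum_const, Finset.card_univ, Fintype.card_fin, nsmul_eq_mul]
  simpa using hΛ A

lemma pi_two_le {E : Type*} [MeasurableSpace E] (ν : Measure E) [IsProbabilityMeasure ν]
    (Λ : Measure E) (N : ℕ) (hΛ : (N : ℝ≥0∞) • ν ≤ Λ) {A B : Set E} (hA : MeasurableSet A)
    (hB : MeasurableSet B) :
    Measure.pi (fun _ : Fin N => ν) {e | ∃ i j, i ≠ j ∧ e i ∈ A ∧ e j ∈ B} ≤ Λ A * Λ B := by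
  have hsub : {e : Fin N → E | ∃ i j, i ≠ j ∧ e i ∈ A ∧ e j ∈ B} ⊆
      ⋃ i, ⋃ j, {e | i ≠ j ∧ e i ∈ A ∧ e j ∈ B} := by
    intro e he; simpa using he
  have h : ∀ i j : Fin N, Measure.pi (fun _ : Fin N => ν) {e | i ≠ j ∧ e i ∈ A ∧ e j ∈ B}
      ≤ ν A * ν B := by
    intro i j
    by_cases hij : i = j
    · simp [hij]
    have hi : iIndepFun (fun (i : Fin N) (e : Fin N → E) => e i)
        (Measure.pi (fun _ : Fin N => ν)) :=
      iIndepFun_pi (X := fun _ x => x) (fun _ => aemeasurable_id)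
    have h2 := (hi.indepFun hij).measure_inter_preimage_eq_mul A B hA hB
    have h3 : ∀ j : Fin N, Measure.pi (fun _ : Fin N => ν) ((fun e => e j) ⁻¹' A) = ν A := fun j =>
      (measurePreserving_eval (fun _ : Fin N => ν) j).measure_preimage hA.nullMeasurableSet
    have h4 : ∀ j : Fin N, Measure.pi (fun _ : Fin N => ν) ((fun e => e j) ⁻¹' B) = ν B := fun j =>
      (measurePreserving_eval (fun _ : Fin N => ν) j).measure_preimage hB.nullMeasurableSet
    rw [h3, h4] at h2
    rw [← h2]
    exact measure_mono fun e he => ⟨he.2.1, he.2.2⟩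
  calc _ ≤ _ := measure_mono hsub
    _ ≤ ∑ i, Measure.pi (fun _ : Fin N => ν) (⋃ j, {e | i ≠ j ∧ e i ∈ A ∧ e j ∈ B}) :=
        measure_iUnion_fintype_le _ _
    _ ≤ ∑ i : Fin N, ∑ j : Fin N, ν A * ν B :=
        Finset.sum_le_sum fun i _ => (measure_iUnion_fintype_le _ _).trans
          (Finset.sum_le_sum fun j _ => h i j)
    _ = (N * ν A) * (N * ν B) := by
        simp only [Finset.sum_const, Finset.card_univ, Fintype.card_fin, nsmul_eq_mul]; ring
    _ ≤ Λ A * Λ B := by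
        gcongr
        · simpa using hΛ A
        · simpa using hΛ B

lemma exp_quad (y : ℝ) : Real.exp y ≤ 1 + y + y^2 * Real.exp |y| := by
  have h := Complex.norm_exp_sub_sum_le_norm_mul_exp (y:ℂ) 2
  simp only [Finset.sum_range_succ, Finset.sum_range_zero, Nat.factorial] at h
  have e : Complex.exp (y:ℂ) - (0 + (y:ℂ)^0/((1:ℕ):ℂ) + (y:ℂ)^1/(((0+1)*1:ℕ):ℂ))
     = ((Real.exp y - (1 + y) : ℝ) : ℂ) := by
    push_cast; simp
  rw [e, Complex.norm_real, Complex.norm_real, Real.norm_eq_abs, Real.norm_eq_abs, sq_abs] at h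
  linarith [le_abs_self (Real.exp y - (1+y))]

lemma chern1 {E : Type*} [MeasurableSpace E] (ν : Measure E) [IsProbabilityMeasure ν]
    (Λ : Measure E) (N : ℕ) (hΛ : (N : ℝ≥0∞) • ν ≤ Λ) (w : E → ℝ) (hw : Measurable w)
    (τ : ℝ) (hτ : 0 < τ) (hwτ : ∀ e, |w e| ≤ τ) (hw0 : ∫ e, w e ∂ν = 0) (ρ : ℝ) (hρ0 : 0 < ρ)
    (hρ1 : ρ ≤ 1) (hρ : ∫⁻ e, ENNReal.ofReal ((w e/τ)^2) ∂Λ ≤ ENNReal.ofReal ρ) (L : ℝ) :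
    Measure.pi (fun _ : Fin N => ν) {e | 2*L*τ ≤ ∑ j, w (e j)}
      ≤ ENNReal.ofReal (Real.exp 2 * ρ^L) := by
  set s : ℝ := -Real.log ρ / (2*τ) with hs
  have hs0 : 0 ≤ s := div_nonneg (by linarith [Real.log_nonpos hρ0.le hρ1]) (by positivity)
  have hsτ : s * τ = -Real.log ρ / 2 := by rw [hs]; field_simp
  have hbd : ∀ e, |s * w e| ≤ s * τ := fun e => by
    rw [abs_mul, abs_of_nonneg hs0]; gcongr; exact hwτ e
  have hwint : Integrable w ν := Integrable.of_bound hw.aestronglyMeasurable τ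
    (ae_of_all _ fun e => by simpa using hwτ e)
  have hw2int : Integrable (fun e => (w e)^2) ν :=
    Integrable.of_bound (hw.pow_const 2).aestronglyMeasurable (τ^2)
    (ae_of_all _ fun e => by
      rw [Real.norm_eq_abs, abs_pow]; gcongr; exact hwτ e)
  have hexpint : Integrable (fun e => Real.exp (s * w e)) ν :=
    Integrable.of_bound (by fun_prop) (Real.exp (s*τ))
    (ae_of_all _ fun e => by
      rw [Real.norm_eq_abs, Real.abs_exp]
      exact Real.exp_le_exp.2 ((le_abs_self _).trans (hbd e)))
  -- second moment
  have hN2 : N * ∫ e, (w e)^2 ∂ν ≤ τ^2 * ρ := by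
    have h1 : (N:ℝ≥0∞) * ∫⁻ e, ENNReal.ofReal ((w e/τ)^2) ∂ν ≤ ENNReal.ofReal ρ := by
      rw [← smul_eq_mul, ← lintegral_smul_measure]
      exact (lintegral_mono' hΛ le_rfl).trans hρ
    have h2 : ∫⁻ e, ENNReal.ofReal ((w e/τ)^2) ∂ν = ENNReal.ofReal (∫ e, (w e/τ)^2 ∂ν) := by
      rw [ofReal_integral_eq_lintegral_ofReal]
      · simp_rw [div_pow]; exact hw2int.div_const _
      · exact ae_of_all _ fun e => sq_nonneg _
    rw [h2, ← ENNReal.ofReal_natCast, ← ENNReal.ofReal_mul (by positivity),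
      ENNReal.ofReal_le_ofReal_iff hρ0.le] at h1
    simp_rw [div_pow] at h1
    rw [integral_div, ← mul_div_assoc, div_le_iff₀ (by positivity)] at h1
    linarith
  have hmg : ∫ e, Real.exp (s * w e) ∂ν ≤ 1 + s^2 * Real.exp (s*τ) * ∫ e, (w e)^2 ∂ν := by
    calc ∫ e, Real.exp (s * w e) ∂ν
        ≤ ∫ e, (1 + s * w e + s^2 * Real.exp (s*τ) * (w e)^2) ∂ν := by
          refine integral_mono hexpint ?_ ?_
          · exact ((integrable_const 1).add (hwint.const_mul s)).add (hw2int.const_mul _)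
          · intro e
            have := exp_quad (s * w e)
            have h3 : (s * w e)^2 * Real.exp |s * w e| ≤ (s * w e)^2 * Real.exp (s*τ) := by
              gcongr; exact hbd e
            simp only
            nlinarith
      _ = _ := by
          have h12 : Integrable (fun e => 1 + s * w e) ν :=
            (integrable_const 1).add (hwint.const_mul s)
          rw [integral_add h12 (hw2int.const_mul _),
            integral_add (integrable_const 1) (hwint.const_mul s), integral_const_mul,
            integral_const_mul, hw0]
          simp
  have hprod : ∀ e : Fin N → E, Real.exp (s * ∑ j, w (e j)) = ∏ j, Real.exp (s * w (e j)) := by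
    intro e; rw [Finset.mul_sum, Real.exp_sum]
  have hmgf : mgf (fun e : Fin N → E => ∑ j, w (e j)) (Measure.pi (fun _ : Fin N => ν)) s
      = (∫ e, Real.exp (s * w e) ∂ν)^N := by
    unfold mgf
    simp_rw [hprod]
    rw [integral_fintype_prod_eq_pow (ι := Fin N) (fun e => Real.exp (s * w e)), Fintype.card_fin]
  have hI : Integrable (fun e : Fin N → E => Real.exp (s * ∑ j, w (e j)))
      (Measure.pi (fun _ : Fin N => ν)) := by
    simp_rw [hprod]
    exact Integrable.fintype_prod (fun _ => hexpint)
  have hch := measure_ge_le_exp_mul_mgf (2*L*τ) hs0 hI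
  rw [hmgf] at hch
  have hfin : Real.exp (-s * (2*L*τ)) * (∫ e, Real.exp (s * w e) ∂ν)^N ≤ Real.exp 2 * ρ^L := by
    have h1 : Real.exp (-s * (2*L*τ)) = ρ^L := by
      rw [Real.rpow_def_of_pos hρ0]
      congr 1
      have : -s * (2*L*τ) = -(s*τ)*(2*L) := by ring
      rw [this, hsτ]; ring
    have h2 : (∫ e, Real.exp (s * w e) ∂ν)^N ≤ Real.exp 2 := by
      set q := s^2 * Real.exp (s*τ) * ∫ e, (w e)^2 ∂ν with hq
      calc (∫ e, Real.exp (s * w e) ∂ν)^N ≤ (Real.exp q)^N := by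
            apply pow_le_pow_left₀ (integral_nonneg fun _ => (Real.exp_pos _).le)
            linarith [Real.add_one_le_exp q]
        _ = Real.exp (N * q) := by rw [← Real.exp_nat_mul]
        _ ≤ Real.exp 2 := by
            apply Real.exp_le_exp.2
            have e1 : N * q = s^2 * Real.exp (s*τ) * (N * ∫ e, (w e)^2 ∂ν) := by rw [hq]; ring
            have e2 : s^2 * Real.exp (s*τ) * (N * ∫ e, (w e)^2 ∂ν)
                ≤ s^2 * Real.exp (s*τ) * (τ^2 * ρ) := by gcongr
            have e3 : (s*τ)^2 ≤ 2 * Real.exp (s*τ) := by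
              have := Real.quadratic_le_exp_of_nonneg (mul_nonneg hs0 hτ.le)
              nlinarith [mul_nonneg hs0 hτ.le]
            have e4 : Real.exp (s*τ) * Real.exp (s*τ) * ρ = 1 := by
              rw [← Real.exp_add, hsτ]
              have : -Real.log ρ / 2 + -Real.log ρ / 2 = -Real.log ρ := by ring
              rw [this, Real.exp_neg, Real.exp_log hρ0]
              field_simp
            have e5 : s^2 * Real.exp (s*τ) * (τ^2 * ρ) ≤ 2 := by
              calc s^2 * Real.exp (s*τ) * (τ^2 * ρ) = (s*τ)^2 * (Real.exp (s*τ) * ρ) := by ring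
                _ ≤ (2 * Real.exp (s*τ)) * (Real.exp (s*τ) * ρ) := by gcongr
                _ = 2 * (Real.exp (s*τ) * Real.exp (s*τ) * ρ) := by ring
                _ = 2 := by rw [e4]; ring
            linarith
    rw [h1, mul_comm]
    gcongr
  rw [← ofReal_measureReal]
  exact ENNReal.ofReal_le_ofReal (hch.trans hfin)

lemma chern {E : Type*} [MeasurableSpace E] (ν : Measure E) [IsProbabilityMeasure ν]
    (Λ : Measure E) (N : ℕ) (hΛ : (N : ℝ≥0∞) • ν ≤ Λ) (w : E → ℝ) (hw : Measurable w)
    (τ : ℝ) (hτ : 0 < τ) (hwτ : ∀ e, |w e| ≤ τ) (hw0 : ∫ e, w e ∂ν = 0) (ρ : ℝ) (hρ0 : 0 < ρ)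
    (hρ : ∫⁻ e, ENNReal.ofReal ((w e/τ)^2) ∂Λ ≤ ENNReal.ofReal ρ) (L : ℝ) (hL : 0 ≤ L) :
    Measure.pi (fun _ : Fin N => ν) {e | 2*L*τ < |∑ j, w (e j)|}
      ≤ ENNReal.ofReal (2 * Real.exp 2 * ρ^L) := by
  rcases le_total ρ 1 with h1 | h1
  · have a1 := chern1 ν Λ N hΛ w hw τ hτ hwτ hw0 ρ hρ0 h1 hρ L
    have a2 := chern1 ν Λ N hΛ (fun e => - w e) hw.neg τ hτ (fun e => by simpa using hwτ e)
      (by rw [integral_neg, hw0, neg_zero]) ρ hρ0 h1 (by simpa [neg_div] using hρ) L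
    calc _ ≤ Measure.pi (fun _ : Fin N => ν) ({e | 2*L*τ ≤ ∑ j, w (e j)} ∪
          {e | 2*L*τ ≤ ∑ j, - w (e j)}) := by
          refine measure_mono fun e he => ?_
          simp only [Set.mem_ofPred_eq, mem_union, Finset.sum_neg_distrib] at *
          rcases lt_abs.1 he with h | h
          · left; exact h.le
          · right; exact h.le
      _ ≤ _ := (measure_union_le _ _).trans (add_le_add a1 a2)
      _ = _ := by
          rw [← ENNReal.ofReal_add (by positivity) (by positivity)]; congr 1; ring
  · refine prob_le_one.trans ?_
    rw [ENNReal.one_le_ofReal]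
    have := Real.one_le_rpow h1 hL
    have := Real.add_one_le_exp (2:ℝ)
    nlinarith

lemma combo {E : Type*} [MeasurableSpace E] (ν : Measure E) [IsProbabilityMeasure ν]
    (Λ : Measure E) (N : ℕ) (hΛ : (N : ℝ≥0∞) • ν ≤ Λ) (u v : E → ℝ) (hu : Measurable u)
    (hv : Measurable v) (G : Set E) (hG : MeasurableSet G)
    (τ : ℝ) (hτ : 0 < τ)
    (hu0 : ∫ e, (G ∩ {e | |u e| ≤ τ}).indicator u e ∂ν = 0)
    (hv0 : ∫ e, (G ∩ {e | |v e| ≤ τ}).indicator v e ∂ν = 0)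
    (ρ : ℝ) (hρ0 : 0 < ρ)
    (hρu : ∫⁻ e, ENNReal.ofReal (((G ∩ {e | |u e| ≤ τ}).indicator u e/τ)^2) ∂Λ ≤ ENNReal.ofReal ρ)
    (hρv : ∫⁻ e, ENNReal.ofReal (((G ∩ {e | |v e| ≤ τ}).indicator v e/τ)^2) ∂Λ ≤ ENNReal.ofReal ρ)
    (L : ℝ) (hL : 0 ≤ L) :
    Measure.pi (fun _ : Fin N => ν)
      {e | (∀ j, e j ∈ G) ∧ 2*L*τ < |∑ j, u (e j)| ∧ 2*L*τ < |∑ j, v (e j)|}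
      ≤ Λ (G ∩ {e | τ < |u e|}) * Λ (G ∩ {e | τ < |v e|}) +
        Λ (G ∩ {e | τ < |u e| ∧ τ < |v e|}) + ENNReal.ofReal (4 * Real.exp 2 * ρ^L) := by
  have mu : MeasurableSet {e | τ < |u e|} := measurableSet_lt measurable_const hu.abs
  have mv : MeasurableSet {e | τ < |v e|} := measurableSet_lt measurable_const hv.abs
  have mu' : MeasurableSet {e | |u e| ≤ τ} := measurableSet_le hu.abs measurable_const
  have mv' : MeasurableSet {e | |v e| ≤ τ} := measurableSet_le hv.abs measurable_const
  have bd : ∀ (u : E → ℝ) (e : E), |(G ∩ {e | |u e| ≤ τ}).indicator u e| ≤ τ := by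
    intro u e
    by_cases h : e ∈ G ∩ {e | |u e| ≤ τ}
    · rw [indicator_of_mem h]; exact h.2
    · rw [indicator_of_notMem h]; simpa using hτ.le
  have a1 := pi_two_le ν Λ N hΛ (hG.inter mu) (hG.inter mv)
  have a2 := pi_exists_le ν Λ N hΛ (hG.inter (mu.inter mv))
  have a3 := chern ν Λ N hΛ _ (hu.indicator (hG.inter mu')) τ hτ (bd u) hu0 ρ hρ0 hρu L hL
  have a4 := chern ν Λ N hΛ _ (hv.indicator (hG.inter mv')) τ hτ (bd v) hv0 ρ hρ0 hρv L hL
  have hsub : {e : Fin N → E | (∀ j, e j ∈ G) ∧ 2*L*τ < |∑ j, u (e j)| ∧ 2*L*τ < |∑ j, v (e j)|} ⊆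
      ({e | ∃ i j, i ≠ j ∧ e i ∈ G ∩ {e | τ < |u e|} ∧ e j ∈ G ∩ {e | τ < |v e|}} ∪
      {e | ∃ j, e j ∈ G ∩ ({e | τ < |u e|} ∩ {e | τ < |v e|})}) ∪
      ({e | 2*L*τ < |∑ j, (G ∩ {e | |u e| ≤ τ}).indicator u (e j)|} ∪
      {e | 2*L*τ < |∑ j, (G ∩ {e | |v e| ≤ τ}).indicator v (e j)|}) := by
    rintro e ⟨hg, h1, h2⟩
    by_cases c1 : ∃ i, τ < |u (e i)|
    · by_cases c2 : ∃ j, τ < |v (e j)|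
      · left
        obtain ⟨i, hi⟩ := c1
        obtain ⟨j, hj⟩ := c2
        by_cases hij : i = j
        · subst hij; right; exact ⟨i, hg i, hi, hj⟩
        · left; exact ⟨i, j, hij, ⟨hg i, hi⟩, ⟨hg j, hj⟩⟩
      · right; right
        push Not at c2
        have : ∀ j, (G ∩ {e | |v e| ≤ τ}).indicator v (e j) = v (e j) := fun j =>
          indicator_of_mem (show e j ∈ G ∩ {e | |v e| ≤ τ} from ⟨hg j, c2 j⟩) _
        simpa [this] using h2
    · right; left
      push Not at c1
      have : ∀ j, (G ∩ {e | |u e| ≤ τ}).indicator u (e j) = u (e j) := fun j =>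
          indicator_of_mem (show e j ∈ G ∩ {e | |u e| ≤ τ} from ⟨hg j, c1 j⟩) _
      simpa [this] using h1
  refine (measure_mono hsub).trans ((measure_union_le _ _).trans ?_)
  refine add_le_add ((measure_union_le _ _).trans (add_le_add a1 a2))
    ((measure_union_le _ _).trans ((add_le_add a3 a4).trans ?_))
  rw [← ENNReal.ofReal_add (by positivity) (by positivity)]
  apply ENNReal.ofReal_le_ofReal
  linarith

def hh (α r : ℝ) : ℝ := r * |r| ^ (-(1/α) - 1)

lemma hh_meas (α : ℝ) : Measurable (hh α) := by unfold hh; fun_prop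

lemma hh_neg (α r : ℝ) : hh α (-r) = - hh α r := by unfold hh; simp

lemma hh_abs (α r : ℝ) (hr : 0 < |r|) : |hh α r| = |r| ^ (-(1/α)) := by
  unfold hh
  rw [abs_mul, abs_of_nonneg (Real.rpow_nonneg (abs_nonneg r) _)]
  rw [Real.rpow_sub_one hr.ne']
  field_simp

lemma hh_scale (α c r : ℝ) (hc : 0 < c) : hh α (c * r) = c ^ (-(1/α)) * hh α r := by
  unfold hh
  rw [abs_mul, abs_of_pos hc, Real.mul_rpow hc.le (abs_nonneg r), Real.rpow_sub_one hc.ne']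
  field_simp

lemma hh_mom (α : ℝ) (hα : 0 < α) (p : ℝ) (hp : α < p) (r0 : ℝ) (hr0 : 0 < r0) :
    ∫⁻ r in {r : ℝ | r0 ≤ |r|}, ENNReal.ofReal (|hh α r| ^ p) < ⊤ := by
  have hs : 1 < p/α := by rwa [one_lt_div hα]
  have hmeas : MeasurableSet {r : ℝ | r0 ≤ |r|} := measurableSet_le measurable_const (by fun_prop)
  have hfin := finite_integral_one_add_norm (E := ℝ) (μ := volume) (r := p/α) (by simpa using hs)
  calc _ ≤ ∫⁻ r in {r : ℝ | r0 ≤ |r|}, ENNReal.ofReal ((1/r0+1)^(p/α)) *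
        ENNReal.ofReal ((1 + ‖r‖) ^ (-(p/α))) := by
        refine setLIntegral_mono (by fun_prop) fun r hr => ?_
        have hr : r0 ≤ |r| := hr
        have hr' : 0 < |r| := hr0.trans_le hr
        rw [← ENNReal.ofReal_mul (by positivity)]
        apply ENNReal.ofReal_le_ofReal
        rw [hh_abs α r hr', ← Real.rpow_mul (abs_nonneg r), Real.norm_eq_abs]
        have e1 : -(1/α) * p = -(p/α) := by ring
        rw [e1, Real.rpow_neg (abs_nonneg r), Real.rpow_neg (by positivity), ← div_eq_mul_inv,
          ← Real.div_rpow (by positivity) (by positivity), ← Real.inv_rpow (abs_nonneg r)]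
        apply Real.rpow_le_rpow (by positivity) _ (by positivity)
        rw [inv_eq_one_div, div_le_div_iff₀ hr' (by positivity)]
        have : 1 ≤ 1/r0 * |r| := by
          rw [one_div, ← div_eq_inv_mul]; rwa [one_le_div hr0]
        linarith
    _ ≤ ∫⁻ r, ENNReal.ofReal ((1/r0+1)^(p/α)) *
        ENNReal.ofReal ((1 + ‖r‖) ^ (-(p/α))) := setLIntegral_le_lintegral _ _
    _ < ⊤ := by
        rw [lintegral_const_mul' _ _ ENNReal.ofReal_ne_top]
        exact ENNReal.mul_lt_top ENNReal.ofReal_lt_top hfin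

def Kc (α : ℝ) : ℝ≥0∞ := ∫⁻ r, ENNReal.ofReal (1 - Real.cos (hh α r))

lemma Kc_lt_top (α : ℝ) (hα : 0 < α) (hα2 : α < 2) : Kc α < ⊤ := by
  unfold Kc
  have hmeas : MeasurableSet {r : ℝ | (1:ℝ) ≤ |r|} := measurableSet_le measurable_const (by fun_prop)
  rw [← lintegral_add_compl _ hmeas]
  refine ENNReal.add_lt_top.2 ⟨?_, ?_⟩
  · refine lt_of_le_of_lt ?_ (hh_mom α hα 2 hα2 1 one_pos)
    refine lintegral_mono fun r => ENNReal.ofReal_le_ofReal ?_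
    have := Real.one_sub_sq_div_two_le_cos (x := hh α r)
    rw [Real.rpow_two, sq_abs]
    nlinarith [sq_nonneg (hh α r)]
  · calc _ ≤ ∫⁻ r in {r : ℝ | (1:ℝ) ≤ |r|}ᶜ, 2 := by
          refine lintegral_mono fun r => ?_
          rw [show (2:ℝ≥0∞) = ENNReal.ofReal 2 by simp]
          exact ENNReal.ofReal_le_ofReal (by linarith [Real.neg_one_le_cos (hh α r)])
      _ = 2 * volume {r : ℝ | (1:ℝ) ≤ |r|}ᶜ := by simp
      _ ≤ 2 * volume (Icc (-1:ℝ) 1) := by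
          gcongr
          intro r hr
          have : |r| < 1 := by simpa using hr
          exact ⟨(abs_lt.1 this).1.le, (abs_lt.1 this).2.le⟩
      _ < ⊤ := by
          rw [Real.volume_Icc]
          exact ENNReal.mul_lt_top (by simp) ENNReal.ofReal_lt_top

lemma Kc_pos (α : ℝ) (hα : 0 < α) : 0 < Kc α := by
  unfold Kc
  rw [lintegral_pos_iff_support (by have := hh_meas α; fun_prop)]
  have : Ioo (1:ℝ) 2 ⊆ Function.support (fun r => ENNReal.ofReal (1 - Real.cos (hh α r))) := by
    intro r hr
    rw [Function.mem_support, ne_eq, ENNReal.ofReal_eq_zero, not_le, sub_pos]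
    have hr0 : 0 < r := by linarith [hr.1]
    have h1 : hh α r = r ^ (-(1/α)) := by
      unfold hh
      rw [abs_of_pos hr0, Real.rpow_sub_one hr0.ne']; field_simp
    have h2 : 0 < hh α r := by rw [h1]; positivity
    have h3 : hh α r < 1 := by
      rw [h1]; exact Real.rpow_lt_one_of_one_lt_of_neg hr.1 (by simpa using hα)
    rw [← Real.cos_zero]
    exact Real.cos_lt_cos_of_nonneg_of_le_pi le_rfl (by linarith [Real.pi_gt_three]) h2
  refine lt_of_lt_of_le ?_ (measure_mono this)
  rw [Real.volume_Ioo]; norm_num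

lemma Kc_scale (α : ℝ) (hα : 0 < α) (y : ℝ) :
    ∫⁻ r, ENNReal.ofReal (1 - Real.cos (hh α r * y)) = ENNReal.ofReal (|y|^α) * Kc α := by
  rcases eq_or_ne y 0 with rfl | hy
  · simp [Real.zero_rpow hα.ne']
  have hy' : 0 < |y| := abs_pos.2 hy
  set c := |y|^(-α) with hc
  have hc0 : 0 < c := by positivity
  have h1 : ∀ r, Real.cos (hh α r * y) = Real.cos (hh α (c * r)) := by
    intro r
    rw [hh_scale α c r hc0, hc, ← Real.rpow_mul hy'.le,
      show -α * -(1/α) = 1 by field_simp, Real.rpow_one, ← Real.cos_abs, abs_mul, ← abs_abs y,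
      ← abs_mul, Real.cos_abs, mul_comm, abs_abs]
  simp_rw [h1]
  have h2 : ∫⁻ r, ENNReal.ofReal (1 - Real.cos (hh α (c * r))) =
      ∫⁻ r, ENNReal.ofReal (1 - Real.cos (hh α r)) ∂(Measure.map (c * ·) volume) := by
    rw [lintegral_map (by have := hh_meas α; fun_prop) (by fun_prop)]
  rw [h2, Real.map_volume_mul_left hc0.ne', lintegral_smul_measure, smul_eq_mul, Kc]
  congr 2
  rw [abs_of_pos (by positivity), hc, ← Real.rpow_neg hy'.le, neg_neg]

section Arr

variable {S : Type*} [MeasurableSpace S]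

def Lam (α : ℝ) (m : Measure S) : Measure (ℝ × S) := (Kc α)⁻¹ • (volume.prod m)

/-- window -/
def win (α : ℝ) (m : Measure S) (N : ℕ) : Set (ℝ × S) :=
  (Ioo (-(N * ((Kc α).toReal / (2 * (m univ).toReal)))) (N * ((Kc α).toReal / (2 * (m univ).toReal))))
    ×ˢ univ

def nu (α : ℝ) (m : Measure S) (N : ℕ) : Measure (ℝ × S) :=
  (N : ℝ≥0∞)⁻¹ • (Lam α m).restrict (win α m N)

lemma win_meas (α : ℝ) (m : Measure S) (N : ℕ) : MeasurableSet (win α m N) :=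
  measurableSet_Ioo.prod MeasurableSet.univ

lemma nu_smul (α : ℝ) (m : Measure S) (N : ℕ) (hN : 0 < N) :
    (N : ℝ≥0∞) • nu α m N = (Lam α m).restrict (win α m N) := by
  unfold nu
  rw [smul_smul, ENNReal.mul_inv_cancel (by exact_mod_cast hN.ne') (by simp), one_smul]

lemma nu_le (α : ℝ) (m : Measure S) (N : ℕ) (hN : 0 < N) :
    (N : ℝ≥0∞) • nu α m N ≤ Lam α m := by
  rw [nu_smul α m N hN]; exact Measure.restrict_le_self

lemma nu_prob (α : ℝ) (hα : 0 < α) (hα2 : α < 2) (m : Measure S) [IsFiniteMeasure m]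
    (hm : m ≠ 0) (N : ℕ) (hN : 0 < N) : IsProbabilityMeasure (nu α m N) := by
  constructor
  have hK := Kc_lt_top α hα hα2
  have hK0 := Kc_pos α hα
  have hk : 0 < (Kc α).toReal := ENNReal.toReal_pos hK0.ne' hK.ne
  have hM0 : m univ ≠ 0 := by simpa using hm
  have hM : 0 < (m univ).toReal := ENNReal.toReal_pos hM0 (measure_ne_top _ _)
  have hN' : (0:ℝ) < N := by exact_mod_cast hN
  unfold nu Lam
  rw [Measure.smul_apply, Measure.restrict_apply_univ, Measure.smul_apply, win,
    Measure.prod_prod, Real.volume_Ioo, smul_eq_mul, smul_eq_mul]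
  rw [← ENNReal.ofReal_toReal (measure_ne_top m univ), ← ENNReal.ofReal_toReal hK.ne,
    ← ENNReal.ofReal_natCast, ← ENNReal.ofReal_inv_of_pos hk, ← ENNReal.ofReal_inv_of_pos hN',
    ENNReal.toReal_ofReal hk.le, ENNReal.toReal_ofReal hM.le,
    ← ENNReal.ofReal_mul' hM.le, ← ENNReal.ofReal_mul (by positivity),
    ← ENNReal.ofReal_mul (by positivity), ← ENNReal.ofReal_one]
  congr 1
  field_simp
  ring

lemma nu_odd (α : ℝ) (m : Measure S) [IsFiniteMeasure m] (N : ℕ) (F : ℝ × S → ℝ)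
    (hF : ∀ r s, F (-r, s) = - F (r, s)) : ∫ e, F e ∂(nu α m N) = 0 := by
  set T : (ℝ × S) ≃ᵐ (ℝ × S) := (MeasurableEquiv.neg ℝ).prodCongr (MeasurableEquiv.refl S) with hT
  have hTa : ∀ e, T e = (-e.1, e.2) := fun e => rfl
  have h0 : MeasurePreserving T (volume.prod m) (volume.prod m) :=
    (Measure.measurePreserving_neg (volume : Measure ℝ)).prod (MeasurePreserving.id m)
  have h1 : MeasurePreserving T (Lam α m) (Lam α m) := h0.smul_measure _
  have hpre : T ⁻¹' (win α m N) = win α m N := by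
    ext e
    simp only [mem_preimage, hTa, win, mem_prod, mem_Ioo, mem_univ, and_true]
    constructor <;> rintro ⟨h1, h2⟩ <;> constructor <;> linarith
  have h2 : MeasurePreserving T (nu α m N) (nu α m N) := by
    have := h1.restrict_preimage (win_meas α m N)
    rw [hpre] at this
    exact this.smul_measure _
  have h3 := h2.integral_comp' F
  have h4 : ∀ e, F (T e) = - F e := fun e => by rw [hTa]; exact hF e.1 e.2
  simp_rw [h4, integral_neg] at h3
  linarith

lemma char_lim (α : ℝ) (hα : 0 < α) (hα2 : α < 2) (m : Measure S) [IsFiniteMeasure m]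
    (hm : m ≠ 0) (g : S → ℝ) (hg : Measurable g)
    (hgα : ∫⁻ s, ENNReal.ofReal (|g s| ^ α) ∂m < ⊤) :
    Tendsto (fun N : ℕ => (∫ e, Complex.exp (Complex.I * ((hh α e.1 * g e.2 : ℝ) : ℂ))
      ∂(nu α m N))^N) atTop (𝓝 (Complex.exp (-(((∫ s, |g s| ^ α ∂m : ℝ)) : ℂ)))) := by
  have hK := Kc_lt_top α hα hα2
  have hK0 := Kc_pos α hα
  have hk : 0 < (Kc α).toReal := ENNReal.toReal_pos hK0.ne' hK.ne
  have hM0 : m univ ≠ 0 := by simpa using hm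
  have hM : 0 < (m univ).toReal := ENNReal.toReal_pos hM0 (measure_ne_top _ _)
  have hhm := hh_meas α
  set φ : ℝ × S → ℝ := fun e => hh α e.1 * g e.2 with hφ
  have hφm : Measurable φ := by fun_prop
  set A : ℕ → ℝ := fun N => (∫⁻ e in win α m N, ENNReal.ofReal (1 - Real.cos (φ e)) ∂(Lam α m)).toReal
    with hA
  have htot : ∫⁻ e, ENNReal.ofReal (1 - Real.cos (φ e)) ∂(Lam α m) =
      ∫⁻ s, ENNReal.ofReal (|g s| ^ α) ∂m := by
    unfold Lam
    rw [lintegral_smul_measure, lintegral_prod_symm _ (by fun_prop)]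
    simp only [hφ]
    simp_rw [Kc_scale α hα]
    rw [lintegral_mul_const _ (by fun_prop), smul_eq_mul, mul_comm, mul_assoc,
      ENNReal.mul_inv_cancel hK0.ne' hK.ne, mul_one]
  have hcov : AECover (Lam α m) atTop (win α m) := by
    refine ⟨ae_of_all _ fun e => ?_, win_meas α m⟩
    have hl : 0 < (Kc α).toReal / (2 * (m univ).toReal) := by positivity
    have : Tendsto (fun N : ℕ => (N:ℝ) * ((Kc α).toReal / (2 * (m univ).toReal))) atTop atTop :=
      tendsto_natCast_atTop_atTop.atTop_mul_const hl
    filter_upwards [this.eventually_gt_atTop |e.1|] with N hN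
    exact ⟨abs_lt.1 hN, mem_univ _⟩
  have hAlim : Tendsto A atTop (𝓝 (∫ s, |g s| ^ α ∂m)) := by
    rw [integral_eq_lintegral_of_nonneg_ae (ae_of_all _ fun s => by positivity)
      (by fun_prop : Measurable fun s => |g s| ^ α).aestronglyMeasurable, ← htot]
    refine (ENNReal.tendsto_toReal ?_).comp (hcov.lintegral_tendsto_of_countably_generated (by fun_prop))
    rw [htot]; exact hgα.ne
  have hval : ∀ N : ℕ, 0 < N → ∫ e, Complex.exp (Complex.I * ((φ e : ℝ) : ℂ)) ∂(nu α m N)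
      = 1 + ((-(A N)/N : ℝ) : ℂ) := by
    intro N hN
    have := nu_prob α hα hα2 m hm N hN
    have hcint : Integrable (fun e => Real.cos (φ e)) (nu α m N) :=
      Integrable.of_bound (by fun_prop) 1 (ae_of_all _ fun e => Real.abs_cos_le_one _)
    have hsint : Integrable (fun e => Real.sin (φ e)) (nu α m N) :=
      Integrable.of_bound (by fun_prop) 1 (ae_of_all _ fun e => Real.abs_sin_le_one _)
    have e1 : ∀ e, Complex.exp (Complex.I * ((φ e : ℝ) : ℂ)) =
        ((Real.cos (φ e) : ℝ) : ℂ) + ((Real.sin (φ e) : ℝ) : ℂ) * Complex.I := by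
      intro e; rw [mul_comm, Complex.exp_mul_I]; push_cast; rfl
    simp_rw [e1]
    rw [integral_add hcint.ofReal (hsint.ofReal.mul_const _), integral_mul_const,
      integral_complex_ofReal, integral_complex_ofReal, nu_odd α m N (fun e => Real.sin (φ e))
        (by intro r s; simp only [hφ, hh_neg, neg_mul, Real.sin_neg])]
    have e2 : ∫ e, (1 - Real.cos (φ e)) ∂(nu α m N) = A N / N := by
      rw [integral_eq_lintegral_of_nonneg_ae
        (ae_of_all _ fun e => by simpa using Real.cos_le_one (φ e)) (by fun_prop)]
      rw [nu, lintegral_smul_measure, smul_eq_mul, ENNReal.toReal_mul, hA]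
      simp only [ENNReal.toReal_inv, ENNReal.toReal_natCast]
      rw [div_eq_inv_mul]
    rw [integral_sub (integrable_const _) hcint] at e2
    simp only [integral_const, probReal_univ, smul_eq_mul, mul_one] at e2
    have e3 : ∫ e, Real.cos (φ e) ∂(nu α m N) = 1 + -(A N)/N := by rw [neg_div]; linarith
    rw [e3]; push_cast; ring
  have hlim := Complex.tendsto_one_add_pow_exp_of_tendsto (g := fun N : ℕ => ((-(A N)/N : ℝ) : ℂ))
    (t := -(((∫ s, |g s| ^ α ∂m : ℝ)) : ℂ)) ?_
  · refine hlim.congr' ?_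
    filter_upwards [eventually_gt_atTop 0] with N hN
    rw [hval N hN]
  · have : Tendsto (fun N => ((-(A N) : ℝ) : ℂ)) atTop (𝓝 (-(((∫ s, |g s| ^ α ∂m : ℝ)) : ℂ))) := by
      rw [← Complex.ofReal_neg]
      exact (Complex.continuous_ofReal.tendsto _).comp hAlim.neg
    refine this.congr' ?_
    filter_upwards [eventually_gt_atTop 0] with N hN
    have : (N:ℂ) ≠ 0 := by exact_mod_cast hN.ne'
    push_cast; field_simp

lemma momlow (m : Measure S) (u : S → ℝ) (hu : Measurable u) (q p ε : ℝ) (hq : 0 < q)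
    (hqp : q ≤ p) (hε : 0 < ε) (h : ∫⁻ s, ENNReal.ofReal (|u s| ^ p) ∂m ≤ ENNReal.ofReal ε) :
    ∫⁻ s, ENNReal.ofReal (|u s| ^ q) ∂m ≤ ENNReal.ofReal (ε^(q/p)) * (m univ + 1) := by
  have hp : 0 < p := hq.trans_le hqp
  calc _ ≤ ∫⁻ s, ENNReal.ofReal (ε^(q/p)) * (1 + ENNReal.ofReal (ε⁻¹) * ENNReal.ofReal (|u s| ^ p)) ∂m := by
        refine lintegral_mono fun s => ?_
        rw [← ENNReal.ofReal_mul (by positivity), ← ENNReal.ofReal_one,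
          ← ENNReal.ofReal_add (by positivity) (by positivity),
          ← ENNReal.ofReal_mul (by positivity)]
        apply ENNReal.ofReal_le_ofReal
        set x := ε⁻¹ * |u s|^p with hx
        have hx0 : 0 ≤ x := by positivity
        have e1 : |u s|^q = ε^(q/p) * x^(q/p) := by
          rw [← Real.mul_rpow hε.le hx0, hx, ← mul_assoc, mul_inv_cancel₀ hε.ne', one_mul,
            ← Real.rpow_mul (abs_nonneg _)]
          congr 1; field_simp
        rw [e1]
        have e2 : x^(q/p) ≤ 1 + x := by
          have hqp' : q/p ≤ 1 := by rwa [div_le_one hp]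
          rcases le_total x 1 with h | h
          · linarith [Real.rpow_le_one hx0 h (by positivity : 0 ≤ q/p)]
          · have := Real.rpow_le_rpow_of_exponent_le h hqp'
            rw [Real.rpow_one] at this; linarith
        gcongr
    _ = ENNReal.ofReal (ε^(q/p)) * (m univ + ENNReal.ofReal (ε⁻¹) * ∫⁻ s, ENNReal.ofReal (|u s| ^ p) ∂m) := by
        rw [lintegral_const_mul' _ _ ENNReal.ofReal_ne_top, lintegral_add_left (by fun_prop),
          lintegral_const_mul' _ _ ENNReal.ofReal_ne_top]
        simp
    _ ≤ ENNReal.ofReal (ε^(q/p)) * (m univ + ENNReal.ofReal (ε⁻¹) * ENNReal.ofReal ε) := by gcongr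
    _ = _ := by
        rw [← ENNReal.ofReal_mul (by positivity), inv_mul_cancel₀ hε.ne', ENNReal.ofReal_one]

/-- good region -/
def GG (S : Type*) (r0 : ℝ) : Set (ℝ × S) := {e | r0 ≤ |e.1|}

lemma GG_meas (r0 : ℝ) : MeasurableSet (GG S r0) :=
  measurableSet_le measurable_const (by fun_prop)

def Hm (α r0 p : ℝ) : ℝ≥0∞ := (Kc α)⁻¹ * ∫⁻ r in {r : ℝ | r0 ≤ |r|}, ENNReal.ofReal (|hh α r| ^ p)

lemma Hm_lt (α : ℝ) (hα : 0 < α) (p : ℝ) (hp : α < p) (r0 : ℝ) (hr0 : 0 < r0) :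
    Hm α r0 p < ⊤ :=
  ENNReal.mul_lt_top (ENNReal.inv_lt_top.2 (Kc_pos α hα)) (hh_mom α hα p hp r0 hr0)

lemma Lam_mom (α : ℝ) (m : Measure S) [IsFiniteMeasure m] (r0 p : ℝ) (z : S → ℝ≥0∞)
    (hz : Measurable z) :
    ∫⁻ e in GG S r0, ENNReal.ofReal (|hh α e.1| ^ p) * z e.2 ∂(Lam α m) = Hm α r0 p * ∫⁻ s, z s ∂m := by
  have hhm := hh_meas α
  have e : GG S r0 = {r : ℝ | r0 ≤ |r|} ×ˢ univ := by ext e; simp [GG]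
  rw [Lam, Measure.restrict_smul, lintegral_smul_measure, e, ← Measure.prod_restrict,
    Measure.restrict_univ, lintegral_prod_mul (f := fun r => ENNReal.ofReal (|hh α r| ^ p))
      (by fun_prop) hz.aemeasurable, Hm, smul_eq_mul, mul_assoc]

lemma Lam_bad (α : ℝ) (m : Measure S) [IsFiniteMeasure m] (r0 : ℝ) :
    Lam α m (GG S r0)ᶜ ≤ (Kc α)⁻¹ * (ENNReal.ofReal (2*r0) * m univ) := by
  have e : (GG S r0)ᶜ = Ioo (-r0) r0 ×ˢ univ := by
    ext e; simp [GG, abs_lt]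
  rw [Lam, Measure.smul_apply, e, Measure.prod_prod, Real.volume_Ioo, smul_eq_mul]
  gcongr; linarith

lemma markov_aux {E : Type*} [MeasurableSpace E] (Λ : Measure E) (G A : Set E) (hG : MeasurableSet G)
    (hA : MeasurableSet A) (φ : E → ℝ≥0∞) (c : ℝ≥0∞)
    (h : ∀ e ∈ A, 1 ≤ c * φ e) (hc : c ≠ ⊤) :
    Λ (G ∩ A) ≤ c * ∫⁻ e in G, φ e ∂Λ := by
  rw [← lintegral_const_mul' _ _ hc, ← setLIntegral_one]
  calc _ ≤ ∫⁻ e in G ∩ A, c * φ e ∂Λ := setLIntegral_mono' (hG.inter hA) fun e he => h e he.2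
    _ ≤ _ := lintegral_mono_set inter_subset_left

lemma key_est (α : ℝ) (hα : 0 < α) (hα2 : α < 2) (m : Measure S) [IsFiniteMeasure m] (hm : m ≠ 0)
    (p₁ p₂ : ℝ) (hp₁ : α < p₁) (hp₂ : α/2 < p₂) (r0 : ℝ) (hr0 : 0 < r0) :
    ∃ C : ℝ, 0 ≤ C ∧ ∀ N : ℕ, 0 < N → ∀ u v : S → ℝ, Measurable u → Measurable v → ∀ ε₁ ε₂ l : ℝ,
      0 < ε₁ → 0 < ε₂ → 0 < l →
      ∫⁻ s, ENNReal.ofReal (|u s| ^ p₁) ∂m ≤ ENNReal.ofReal ε₁ →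
      ∫⁻ s, ENNReal.ofReal (|v s| ^ p₁) ∂m ≤ ENNReal.ofReal ε₁ →
      ∫⁻ s, ENNReal.ofReal (|u s * v s| ^ p₂) ∂m ≤ ENNReal.ofReal ε₂ →
      Measure.pi (fun _ : Fin N => nu α m N) {e | (∀ j, e j ∈ GG S r0) ∧
        l < |∑ j, hh α (e j).1 * u (e j).2| ∧ l < |∑ j, hh α (e j).1 * v (e j).2|} ≤
      ENNReal.ofReal (C * (l^(-(2*p₁)) * ε₁^2 + l^(-(2*p₂)) * ε₂)) := by
  have hp1 : 0 < p₁ := hα.trans hp₁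
  have hp2 : 0 < p₂ := (half_pos hα).trans hp₂
  set q := min 2 p₁ with hq
  have hqα : α < q := lt_min hα2 hp₁
  have hq0 : 0 < q := hα.trans hqα
  have hq2 : q ≤ 2 := min_le_left _ _
  have hqp : q ≤ p₁ := min_le_right _ _
  set L := 2*p₁/q with hL
  have hL0 : 0 < L := by positivity
  have hhm := hh_meas α
  set K1 := (Hm α r0 p₁).toReal with hK1
  set K2 := (Hm α r0 (2*p₂)).toReal with hK2
  set Kq := (Hm α r0 q * (m univ + 1)).toReal + 1 with hKq
  have hK1' : Hm α r0 p₁ = ENNReal.ofReal K1 :=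
    (ENNReal.ofReal_toReal (Hm_lt α hα p₁ hp₁ r0 hr0).ne).symm
  have hK2' : Hm α r0 (2*p₂) = ENNReal.ofReal K2 :=
    (ENNReal.ofReal_toReal (Hm_lt α hα (2*p₂) (by linarith) r0 hr0).ne).symm
  have hKq' : Hm α r0 q * (m univ + 1) ≤ ENNReal.ofReal Kq := by
    rw [ENNReal.le_ofReal_iff_toReal_le _ (by positivity)]
    · linarith
    · exact ENNReal.mul_ne_top (Hm_lt α hα q hqα r0 hr0).ne
        (ENNReal.add_ne_top.2 ⟨measure_ne_top _ _, by simp⟩)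
  have hK1n : 0 ≤ K1 := ENNReal.toReal_nonneg
  have hK2n : 0 ≤ K2 := ENNReal.toReal_nonneg
  have hKqn : 0 < Kq := by positivity
  have mom : ∀ (u : S → ℝ) (hu : Measurable u) (p : ℝ),
      ∫⁻ e in GG S r0, ENNReal.ofReal (|hh α e.1 * u e.2| ^ p) ∂(Lam α m) =
        Hm α r0 p * ∫⁻ s, ENNReal.ofReal (|u s| ^ p) ∂m := by
    intro u hu p
    rw [← Lam_mom α m r0 p _ (by fun_prop)]
    refine lintegral_congr fun e => ?_
    rw [← ENNReal.ofReal_mul (by positivity), abs_mul, Real.mul_rpow (abs_nonneg _) (abs_nonneg _)]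
  set c1 := (2*L)^(2*p₁) * K1^2 + 4 * Real.exp 2 * (Kq^L * (2*L)^(2*p₁)) with hc1
  set c2 := (2*L)^(2*p₂) * K2 with hc2
  have hc1n : 0 ≤ c1 := by positivity
  have hc2n : 0 ≤ c2 := by positivity
  refine ⟨c1 + c2, by positivity, ?_⟩
  intro N hN u v hu hv ε₁ ε₂ l hε₁ hε₂ hl h1 h2 h3
  have := nu_prob α hα hα2 m hm N hN
  set τ := l/(2*L) with hτ
  have hτ0 : 0 < τ := by positivity
  have hlτ : l = 2*L*τ := by rw [hτ]; field_simp
  set ρ := Kq * τ^(-q) * ε₁^(q/p₁) with hρ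
  have hρ0 : 0 < ρ := by positivity
  have big : ∀ (u : S → ℝ) (hu : Measurable u),
      ∫⁻ s, ENNReal.ofReal (|u s| ^ p₁) ∂m ≤ ENNReal.ofReal ε₁ →
      Lam α m (GG S r0 ∩ {e | τ < |hh α e.1 * u e.2|}) ≤ ENNReal.ofReal (τ^(-p₁) * (K1 * ε₁)) := by
    intro u hu h
    have hmeas : Measurable fun e : ℝ × S => |hh α e.1 * u e.2| := by fun_prop
    refine (markov_aux (Lam α m) (GG S r0) _ (GG_meas r0) (measurableSet_lt measurable_const hmeas)
      (fun e => ENNReal.ofReal (|hh α e.1 * u e.2| ^ p₁)) (ENNReal.ofReal (τ^(-p₁))) ?_ (by simp)).trans ?_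
    · intro e he
      have he : τ < |hh α e.1 * u e.2| := he
      rw [← ENNReal.ofReal_mul (by positivity), ENNReal.one_le_ofReal, Real.rpow_neg hτ0.le,
        ← div_eq_inv_mul, one_le_div (by positivity)]
      exact Real.rpow_le_rpow hτ0.le he.le hp1.le
    · rw [mom u hu, hK1', ENNReal.ofReal_mul (by positivity), ENNReal.ofReal_mul hK1n]
      gcongr
  have dbl : Lam α m (GG S r0 ∩ {e | τ < |hh α e.1 * u e.2| ∧ τ < |hh α e.1 * v e.2|})
      ≤ ENNReal.ofReal (τ^(-(2*p₂)) * (K2 * ε₂)) := by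
    have hmu : Measurable fun e : ℝ × S => |hh α e.1 * u e.2| := by fun_prop
    have hmv : Measurable fun e : ℝ × S => |hh α e.1 * v e.2| := by fun_prop
    refine (markov_aux (Lam α m) (GG S r0) _ (GG_meas r0)
      ((measurableSet_lt measurable_const hmu).inter (measurableSet_lt measurable_const hmv))
      (fun e => ENNReal.ofReal (|hh α e.1| ^ (2*p₂)) * ENNReal.ofReal (|u e.2 * v e.2| ^ p₂))
      (ENNReal.ofReal (τ^(-(2*p₂)))) ?_ (by simp)).trans ?_
    · rintro e ⟨h1, h2⟩
      have h1 : τ < |hh α e.1 * u e.2| := h1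
      have h2 : τ < |hh α e.1 * v e.2| := h2
      rw [← ENNReal.ofReal_mul (by positivity), ← ENNReal.ofReal_mul (by positivity),
        ENNReal.one_le_ofReal, Real.rpow_neg hτ0.le,
        ← div_eq_inv_mul, one_le_div (by positivity), Real.rpow_mul hτ0.le,
        Real.rpow_mul (abs_nonneg _), ← Real.mul_rpow (by positivity) (by positivity)]
      refine Real.rpow_le_rpow (by positivity) ?_ hp2.le
      rw [Real.rpow_two, Real.rpow_two]
      calc τ^2 = τ * τ := sq τ
        _ ≤ |hh α e.1 * u e.2| * |hh α e.1 * v e.2| := by gcongr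
        _ = _ := by rw [abs_mul, abs_mul, abs_mul]; ring
    · rw [Lam_mom α m r0 (2*p₂) (fun s => ENNReal.ofReal (|u s * v s| ^ p₂)) (by fun_prop), hK2',
        ENNReal.ofReal_mul (by positivity), ENNReal.ofReal_mul hK2n]
      gcongr
  have small : ∀ (u : S → ℝ) (hu : Measurable u),
      ∫⁻ s, ENNReal.ofReal (|u s| ^ p₁) ∂m ≤ ENNReal.ofReal ε₁ →
      ∫⁻ e, ENNReal.ofReal (((GG S r0 ∩ {e | |hh α e.1 * u e.2| ≤ τ}).indicator
        (fun e => hh α e.1 * u e.2) e/τ)^2) ∂(Lam α m) ≤ ENNReal.ofReal ρ := by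
    intro u hu h
    calc _ ≤ ∫⁻ e, (GG S r0).indicator (fun e => ENNReal.ofReal (τ^(-q)) *
          ENNReal.ofReal (|hh α e.1 * u e.2| ^ q)) e ∂(Lam α m) := by
          refine lintegral_mono fun e => ?_
          by_cases he : e ∈ GG S r0 ∩ {e | |hh α e.1 * u e.2| ≤ τ}
          · rw [indicator_of_mem he, indicator_of_mem he.1, ← ENNReal.ofReal_mul (by positivity)]
            apply ENNReal.ofReal_le_ofReal
            have he2 : |hh α e.1 * u e.2| ≤ τ := he.2
            rw [Real.rpow_neg hτ0.le, ← div_eq_inv_mul, ← Real.div_rpow (abs_nonneg _) hτ0.le,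
              ← sq_abs, abs_div, abs_of_pos hτ0, ← Real.rpow_two]
            have y1 : |hh α e.1 * u e.2|/τ ≤ 1 := by rwa [div_le_one hτ0]
            have y0 : 0 ≤ |hh α e.1 * u e.2|/τ := by positivity
            rcases y0.eq_or_lt with y | y
            · rw [← y, Real.zero_rpow (by norm_num)]; exact Real.rpow_nonneg le_rfl _
            · exact Real.rpow_le_rpow_of_exponent_ge y y1 hq2
          · rw [indicator_of_notMem he]; simp
      _ = ENNReal.ofReal (τ^(-q)) * (Hm α r0 q * ∫⁻ s, ENNReal.ofReal (|u s| ^ q) ∂m) := by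
          rw [lintegral_indicator (GG_meas r0), lintegral_const_mul' _ _ (by simp), mom u hu]
      _ ≤ ENNReal.ofReal (τ^(-q)) * (Hm α r0 q * (ENNReal.ofReal (ε₁^(q/p₁)) * (m univ + 1))) := by
          gcongr; exact momlow m u hu q p₁ ε₁ hq0 hqp hε₁ h
      _ = ENNReal.ofReal (τ^(-q)) * ENNReal.ofReal (ε₁^(q/p₁)) * (Hm α r0 q * (m univ + 1)) := by ring
      _ ≤ ENNReal.ofReal (τ^(-q)) * ENNReal.ofReal (ε₁^(q/p₁)) * ENNReal.ofReal Kq := by gcongr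
      _ = ENNReal.ofReal ρ := by
          rw [← ENNReal.ofReal_mul (by positivity), ← ENNReal.ofReal_mul (by positivity)]
          congr 1; rw [hρ]; ring
  have zero : ∀ (u : S → ℝ), ∫ e, (GG S r0 ∩ {e | |hh α e.1 * u e.2| ≤ τ}).indicator
        (fun e => hh α e.1 * u e.2) e ∂(nu α m N) = 0 := by
    intro u
    apply nu_odd
    intro r s
    by_cases h : ((r, s) : ℝ × S) ∈ GG S r0 ∩ {e | |hh α e.1 * u e.2| ≤ τ}
    · have h' : ((-r, s) : ℝ × S) ∈ GG S r0 ∩ {e | |hh α e.1 * u e.2| ≤ τ} := by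
        refine ⟨?_, ?_⟩
        · have : r0 ≤ |r| := h.1
          show r0 ≤ |-r|
          rwa [abs_neg]
        · have : |hh α r * u s| ≤ τ := h.2
          show |hh α (-r) * u s| ≤ τ
          rwa [hh_neg, neg_mul, abs_neg]
      rw [indicator_of_mem h, indicator_of_mem h', hh_neg, neg_mul]
    · have h' : ((-r, s) : ℝ × S) ∉ GG S r0 ∩ {e | |hh α e.1 * u e.2| ≤ τ} := by
        rintro ⟨a, b⟩
        apply h
        refine ⟨?_, ?_⟩
        · have : r0 ≤ |-r| := a
          show r0 ≤ |r|
          rwa [abs_neg] at this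
        · have : |hh α (-r) * u s| ≤ τ := b
          show |hh α r * u s| ≤ τ
          rwa [hh_neg, neg_mul, abs_neg] at this
      rw [indicator_of_notMem h, indicator_of_notMem h', neg_zero]
  have main := combo (nu α m N) (Lam α m) N (nu_le α m N hN) (fun e => hh α e.1 * u e.2)
    (fun e => hh α e.1 * v e.2) (by fun_prop) (by fun_prop) (GG S r0) (GG_meas r0) τ hτ0
    (zero u) (zero v) ρ hρ0 (small u hu h1) (small v hv h2) L hL0.le
  rw [← hlτ] at main
  refine main.trans ?_
  calc _ ≤ ENNReal.ofReal (τ^(-p₁) * (K1 * ε₁)) * ENNReal.ofReal (τ^(-p₁) * (K1 * ε₁)) +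
        ENNReal.ofReal (τ^(-(2*p₂)) * (K2 * ε₂)) + ENNReal.ofReal (4 * Real.exp 2 * ρ^L) := by
        gcongr
        · exact big u hu h1
        · exact big v hv h2
    _ = ENNReal.ofReal (τ^(-p₁) * (K1 * ε₁) * (τ^(-p₁) * (K1 * ε₁)) +
        τ^(-(2*p₂)) * (K2 * ε₂) + 4 * Real.exp 2 * ρ^L) := by
        rw [← ENNReal.ofReal_mul (by positivity), ← ENNReal.ofReal_add (by positivity) (by positivity),
          ← ENNReal.ofReal_add (by positivity) (by positivity)]
    _ ≤ _ := by
        apply ENNReal.ofReal_le_ofReal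
        have t1 : τ^(-(2*p₁)) = (2*L)^(2*p₁) * l^(-(2*p₁)) := by
          rw [hτ, Real.div_rpow hl.le (by positivity), Real.rpow_neg (by positivity : 0 ≤ 2*L)]
          rw [div_inv_eq_mul, mul_comm]
        have t2 : τ^(-(2*p₂)) = (2*L)^(2*p₂) * l^(-(2*p₂)) := by
          rw [hτ, Real.div_rpow hl.le (by positivity), Real.rpow_neg (by positivity : 0 ≤ 2*L)]
          rw [div_inv_eq_mul, mul_comm]
        have t3 : τ^(-p₁) * τ^(-p₁) = τ^(-(2*p₁)) := by
          rw [← Real.rpow_add hτ0]; congr 1; ring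
        have t4 : ρ^L = Kq^L * τ^(-(2*p₁)) * ε₁^2 := by
          rw [hρ, Real.mul_rpow (by positivity) (by positivity),
            Real.mul_rpow (by positivity) (by positivity), ← Real.rpow_mul hτ0.le,
            ← Real.rpow_mul hε₁.le, ← Real.rpow_two]
          congr 2
          · congr 1; rw [hL]; field_simp
          · rw [hL]; field_simp
        have hA : 0 ≤ l^(-(2*p₁)) * ε₁^2 := by positivity
        have hB : 0 ≤ l^(-(2*p₂)) * ε₂ := by positivity
        have : τ^(-p₁) * (K1 * ε₁) * (τ^(-p₁) * (K1 * ε₁)) +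
          τ^(-(2*p₂)) * (K2 * ε₂) + 4 * Real.exp 2 * ρ^L =
            c1 * (l^(-(2*p₁)) * ε₁^2) + c2 * (l^(-(2*p₂)) * ε₂) := by
          have : τ^(-p₁) * (K1 * ε₁) * (τ^(-p₁) * (K1 * ε₁)) = (τ^(-p₁) * τ^(-p₁)) * (K1^2 * ε₁^2) := by
            ring
          rw [this, t3, t4, t2, t1, hc1, hc2]; ring
        rw [this]
        nlinarith [mul_nonneg hc1n hB, mul_nonneg hc2n hA]

end Arr

section Fin5
variable {S : Type*} [MeasurableSpace S]

lemma lin_mom {ι : Type*} [Fintype ι] (m : Measure S) (α : ℝ) (hα : 0 < α)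
    (u : ι → S → ℝ) (hu : ∀ i, Measurable (u i))
    (h : ∀ i, ∫⁻ s, ENNReal.ofReal (|u i s| ^ α) ∂m < ⊤) (θ : ι → ℝ) :
    ∫⁻ s, ENNReal.ofReal (|∑ i, θ i * u i s| ^ α) ∂m < ⊤ := by
  have key : ∀ v : S → ℝ, Measurable v →
      (MemLp v (ENNReal.ofReal α) m ↔ ∫⁻ s, ENNReal.ofReal (|v s| ^ α) ∂m < ⊤) := by
    intro v hv
    have h1 := eLpNorm_lt_top_iff_lintegral_rpow_enorm_lt_top (μ := m) (f := v)
      (p := ENNReal.ofReal α) (by simpa using hα) (by simp)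
    rw [ENNReal.toReal_ofReal hα.le] at h1
    have h2 : ∀ s, ‖v s‖ₑ ^ α = ENNReal.ofReal (|v s| ^ α) := by
      intro s
      rw [← ENNReal.ofReal_rpow_of_nonneg (abs_nonneg _) hα.le, Real.enorm_eq_ofReal_abs]
    simp_rw [h2] at h1
    rw [← h1]
    exact ⟨fun h => h.2, fun h => ⟨hv.aestronglyMeasurable, h⟩⟩
  rw [← key _ (Finset.measurable_sum _ fun i _ => (hu i).const_mul _)]
  exact memLp_finsetSum _ fun i _ => ((key _ (hu i)).2 (h i)).const_mul _

lemma transfer {ι : Type*} [Fintype ι] (m : Measure S) [IsFiniteMeasure m] (hm : m ≠ 0)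
    {Ω : Type*} [MeasurableSpace Ω] (P : Measure Ω) [IsProbabilityMeasure P]
    (α : ℝ) (hα : 0 < α) (hα2 : α < 2)
    (f : unitInterval → S → ℝ) (hfmeas : ∀ t, Measurable (f t))
    (hfLα : ∀ t, ∫⁻ s, ENNReal.ofReal (|f t s| ^ α) ∂m < ⊤)
    (X : Ω → unitInterval → ℝ) (hXmeas : ∀ t, Measurable fun ω => X ω t)
    (hXstable : ∀ (n : ℕ) (t : Fin n → unitInterval) (θ : Fin n → ℝ),
      ∫ ω, Complex.exp (Complex.I * ((∑ k, θ k * X ω (t k) : ℝ) : ℂ)) ∂P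
        = Complex.exp (-(((∫ s, |∑ k, θ k * f (t k) s| ^ α ∂m : ℝ)) : ℂ)))
    (t : ι → unitInterval) (O : Set (ι → ℝ)) (hO : IsOpen O) (B : ℝ≥0∞)
    (hB : ∀ N : ℕ, 0 < N → Measure.pi (fun _ : Fin N => nu α m N)
      {e | (fun i => ∑ j, hh α (e j).1 * f (t i) (e j).2) ∈ O} ≤ B) :
    P {ω | (fun i => X ω (t i)) ∈ O} ≤ B := by
  have hst : ∀ θ : ι → ℝ,
      ∫ ω, Complex.exp (Complex.I * ((∑ i, θ i * X ω (t i) : ℝ) : ℂ)) ∂P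
        = Complex.exp (-(((∫ s, |∑ i, θ i * f (t i) s| ^ α ∂m : ℝ)) : ℂ)) := by
    intro θ
    have := hXstable (Fintype.card ι) (fun k => t ((Fintype.equivFin ι).symm k))
      (fun k => θ ((Fintype.equivFin ι).symm k))
    have e1 : ∀ ω, ∑ k, θ ((Fintype.equivFin ι).symm k) * X ω (t ((Fintype.equivFin ι).symm k))
        = ∑ i, θ i * X ω (t i) := fun ω =>
      Equiv.sum_comp (Fintype.equivFin ι).symm (fun i => θ i * X ω (t i))
    have e2 : ∀ s, ∑ k, θ ((Fintype.equivFin ι).symm k) * f (t ((Fintype.equivFin ι).symm k)) s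
        = ∑ i, θ i * f (t i) s := fun s =>
      Equiv.sum_comp (Fintype.equivFin ι).symm (fun i => θ i * f (t i) s)
    simp_rw [e1, e2] at this
    exact this
  have hnu : ∀ N : ℕ, IsProbabilityMeasure (nu α m (N+1)) :=
    fun N => nu_prob α hα hα2 m hm (N+1) N.succ_pos
  have hhm := hh_meas α
  let Y : (N : ℕ) → (Fin (N+1) → ℝ × S) → EuclideanSpace ℝ ι :=
    fun N e => WithLp.toLp 2 (fun i => ∑ j, hh α (e j).1 * f (t i) (e j).2)
  have hYm : ∀ N, Measurable (Y N) := by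
    intro N
    refine (WithLp.measurable_toLp 2 _).comp (measurable_pi_lambda _ fun i => ?_)
    refine Finset.measurable_sum _ fun j _ => ?_
    exact (hhm.comp (measurable_fst.comp (measurable_pi_apply j))).mul
      ((hfmeas _).comp (measurable_snd.comp (measurable_pi_apply j)))
  let Z : Ω → EuclideanSpace ℝ ι := fun ω => WithLp.toLp 2 (fun i => X ω (t i))
  have hZm : Measurable Z :=
    (WithLp.measurable_toLp 2 _).comp (measurable_pi_lambda _ fun i => hXmeas _)
  let μN : ℕ → ProbabilityMeasure (EuclideanSpace ℝ ι) := fun N =>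
    ⟨(Measure.pi (fun _ : Fin (N+1) => nu α m (N+1))).map (Y N),
      Measure.isProbabilityMeasure_map (hYm N).aemeasurable⟩
  let μ : ProbabilityMeasure (EuclideanSpace ℝ ι) :=
    ⟨P.map Z, Measure.isProbabilityMeasure_map hZm.aemeasurable⟩
  have hconv : Tendsto μN atTop (𝓝 μ) := by
    refine ProbabilityMeasure.tendsto_iff_tendsto_charFun.2 fun θ => ?_
    have gm : Measurable (fun s => ∑ i, θ i * f (t i) s) :=
      Finset.measurable_sum _ fun i _ => (hfmeas _).const_mul _
    have hl := char_lim α hα hα2 m hm (fun s => ∑ i, θ i * f (t i) s) gm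
      (lin_mom m α hα (fun i => f (t i)) (fun i => hfmeas _) (fun i => hfLα _) θ)
    have c1 : charFun (μ : Measure (EuclideanSpace ℝ ι)) θ =
        Complex.exp (-(((∫ s, |∑ i, θ i * f (t i) s| ^ α ∂m : ℝ)) : ℂ)) := by
      rw [← hst θ]
      change charFun (P.map Z) θ = _
      rw [charFun_apply, integral_map hZm.aemeasurable (by fun_prop)]
      refine integral_congr_ae (Eventually.of_forall fun ω => ?_)
      simp only [Z, PiLp.inner_apply, RCLike.inner_apply, conj_trivial]
      rw [mul_comm]
    have c2 : ∀ N, charFun (μN N : Measure (EuclideanSpace ℝ ι)) θ =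
        (∫ e, Complex.exp (Complex.I * ((hh α e.1 * ∑ i, θ i * f (t i) e.2 : ℝ) : ℂ)) ∂(nu α m (N+1)))^(N+1) := by
      intro N
      have := hnu N
      change charFun ((Measure.pi (fun _ : Fin (N+1) => nu α m (N+1))).map (Y N)) θ = _
      rw [charFun_apply, integral_map (hYm N).aemeasurable (by fun_prop)]
      have := integral_fintype_prod_eq_pow (𝕜 := ℂ) (ι := Fin (N+1)) (μ := nu α m (N+1))
        (fun e => Complex.exp (Complex.I * ((hh α e.1 * ∑ i, θ i * f (t i) e.2 : ℝ) : ℂ)))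
      rw [Fintype.card_fin] at this
      rw [← this]
      refine integral_congr_ae (Eventually.of_forall fun e => ?_)
      simp only [Y, PiLp.inner_apply, RCLike.inner_apply, conj_trivial]
      rw [← Complex.exp_sum, ← Finset.mul_sum, mul_comm, ← Complex.ofReal_sum]
      congr 3
      simp_rw [Finset.mul_sum]
      rw [Finset.sum_comm]
      refine Finset.sum_congr rfl fun j _ => Finset.sum_congr rfl fun i _ => by ring
    rw [c1]
    simp_rw [c2]
    exact (tendsto_add_atTop_iff_nat 1).2 hl
  have hO' : IsOpen ((WithLp.ofLp : EuclideanSpace ℝ ι → (ι → ℝ)) ⁻¹' O) :=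
    hO.preimage (PiLp.continuous_ofLp 2 _)
  have := ProbabilityMeasure.le_liminf_measure_open_of_tendsto hconv hO'
  have l1 : P {ω | (fun i => X ω (t i)) ∈ O} =
      (μ : Measure (EuclideanSpace ℝ ι)) ((WithLp.ofLp : EuclideanSpace ℝ ι → (ι → ℝ)) ⁻¹' O) := by
    change _ = (P.map Z) _
    rw [Measure.map_apply hZm hO'.measurableSet]
    rfl
  have l2 : ∀ N, (μN N : Measure (EuclideanSpace ℝ ι))
      ((WithLp.ofLp : EuclideanSpace ℝ ι → (ι → ℝ)) ⁻¹' O) ≤ B := by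
    intro N
    change ((Measure.pi (fun _ : Fin (N+1) => nu α m (N+1))).map (Y N)) _ ≤ B
    rw [Measure.map_apply (hYm N) hO'.measurableSet]
    exact hB (N+1) N.succ_pos
  rw [l1]
  refine this.trans ?_
  refine (liminf_le_liminf (Eventually.of_forall l2)).trans ?_
  simp
lemma sumterm (D γ p β : ℝ) (hD : 0 < D) (h : 2 * p * γ < 2 * β - 1) :
    Summable fun n : ℕ => (2:ℝ)^n * (((2:ℝ)^(-γ*(n:ℝ)))^(-(2*p)) * (D * (2:ℝ)^(-(n:ℝ)))^(2*β)) := by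
  have hr : (2:ℝ)^(1 + 2*p*γ - 2*β) < 1 := Real.rpow_lt_one_of_one_lt_of_neg (by norm_num) (by linarith)
  have := (summable_geometric_of_lt_one (by positivity) hr).mul_left (D^(2*β))
  refine this.congr fun n => ?_
  rw [Real.mul_rpow hD.le (by positivity), ← Real.rpow_mul (by norm_num), ← Real.rpow_mul (by norm_num),
    ← Real.rpow_natCast, ← Real.rpow_natCast, ← Real.rpow_mul (by norm_num)]
  have : (2:ℝ) ^ ((1 + 2 * p * γ - 2 * β) * n) =
      2 ^ (n:ℝ) * 2 ^ (-γ * n * -(2 * p)) * 2 ^ (-(n:ℝ) * (2 * β)) := by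
    rw [← Real.rpow_add (by norm_num), ← Real.rpow_add (by norm_num)]
    congr 1; ring
  rw [this]; ring

def badk (x : unitInterval → ℝ) (n : ℕ) (l : ℝ) : Prop :=
  ∃ k < 2^n, l < |x (dy (n+1) (2*k+1)) - x (dy (n+1) (2*k))| ∧
    l < |x (dy (n+1) (2*k+2)) - x (dy (n+1) (2*k+1))|

lemma dy_le (n k j : ℕ) (h : k ≤ j) (hj : j ≤ 2^n) : dy n k ≤ dy n j := by
  rw [← Subtype.coe_le_coe, dy_coe (h.trans hj), dy_coe hj]
  gcongr

lemma bc1 (m : Measure S) [IsFiniteMeasure m] (hm : m ≠ 0)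
    {Ω : Type*} [MeasurableSpace Ω] (P : Measure Ω) [IsProbabilityMeasure P]
    (α : ℝ) (hα : 0 < α) (hα2 : α < 2)
    (f : unitInterval → S → ℝ) (hfmeas : ∀ t, Measurable (f t))
    (hfLα : ∀ t, ∫⁻ s, ENNReal.ofReal (|f t s| ^ α) ∂m < ⊤)
    (X : Ω → unitInterval → ℝ) (hXmeas : ∀ t, Measurable fun ω => X ω t)
    (hXstable : ∀ (n : ℕ) (t : Fin n → unitInterval) (θ : Fin n → ℝ),
      ∫ ω, Complex.exp (Complex.I * ((∑ k, θ k * X ω (t k) : ℝ) : ℂ)) ∂P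
        = Complex.exp (-(((∫ s, |∑ k, θ k * f (t k) s| ^ α ∂m : ℝ)) : ℂ)))
    (β₁ β₂ p₁ p₂ : ℝ) (hp₁ : α < p₁) (hp₂ : α/2 < p₂) (C0 : ℝ) (hC0 : 0 < C0)
    (hB1 : ∀ t₁ t₂ : unitInterval, t₁ ≤ t₂ →
      ∫⁻ s, ENNReal.ofReal (|f t₂ s - f t₁ s| ^ p₁) ∂m
        ≤ ENNReal.ofReal ((C0 * ((t₂:ℝ) - t₁)) ^ β₁))
    (hB2 : ∀ t₁ t t₂ : unitInterval, t₁ ≤ t → t ≤ t₂ →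
      ∫⁻ s, ENNReal.ofReal (|(f t s - f t₁ s) * (f t₂ s - f t s)| ^ p₂) ∂m
        ≤ ENNReal.ofReal ((C0 * ((t₂:ℝ) - t₁)) ^ (2 * β₂)))
    (r0 : ℝ) (hr0 : 0 < r0) : ∃ C, 0 ≤ C ∧ ∀ l : ℕ → ℝ, (∀ n, 0 < l n) → ∀ n0 n1 : ℕ,
      P {ω | ∃ n, n0 ≤ n ∧ n < n1 ∧ badk (X ω) n (l n)} ≤ Lam α m (GG S r0)ᶜ +
        ∑ n ∈ Finset.Ico n0 n1, ENNReal.ofReal (C * ((2:ℝ)^n * ((l n)^(-(2*p₁)) *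
          ((C0/2) * (2:ℝ)^(-(n:ℝ)))^(2*β₁)) +
          (2:ℝ)^n * ((l n)^(-(2*p₂)) * (C0 * (2:ℝ)^(-(n:ℝ)))^(2*β₂)))) := by
  obtain ⟨C, hC, hkey⟩ := key_est α hα hα2 m hm p₁ p₂ hp₁ hp₂ r0 hr0
  refine ⟨C, hC, fun l hl n0 n1 => ?_⟩
  let ι := Fin (n1+1) × Fin (2^n1+1)
  let t : ι → unitInterval := fun i => dy i.1 i.2
  let ix : ℕ → ℕ → ι := fun n k => (Fin.ofNat _ n, Fin.ofNat _ k)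
  have hix : ∀ n k, n < n1 → k ≤ 2^(n+1) → t (ix (n+1) k) = dy (n+1) k := by
    intro n k hn hk
    have : 2^(n+1) ≤ 2^n1 := Nat.pow_le_pow_right (by norm_num) hn
    simp only [t, ix, Fin.ofNat]
    rw [Nat.mod_eq_of_lt (by omega), Nat.mod_eq_of_lt (by omega)]
  let O : Set (ι → ℝ) := ⋃ n ∈ Finset.Ico n0 n1, ⋃ k ∈ Finset.range (2^n),
    {x | l n < |x (ix (n+1) (2*k+1)) - x (ix (n+1) (2*k))| ∧
      l n < |x (ix (n+1) (2*k+2)) - x (ix (n+1) (2*k+1))|}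
  have hO : IsOpen O := by
    refine isOpen_biUnion fun n _ => isOpen_biUnion fun k _ => ?_
    have hc : ∀ i j : ι, IsOpen {x : ι → ℝ | l n < |x i - x j|} := fun i j =>
      isOpen_lt continuous_const (((continuous_apply i).sub (continuous_apply j)).abs)
    exact (hc _ _).inter (hc _ _)
  have hsub : {ω | ∃ n, n0 ≤ n ∧ n < n1 ∧ badk (X ω) n (l n)} ⊆ {ω | (fun i => X ω (t i)) ∈ O} := by
    rintro ω ⟨n, h0, h1, k, hk, ha, hb⟩
    have h2 : 2^(n+1) = 2 * 2^n := by ring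
    simp only [O, Set.mem_iUnion, Set.mem_ofPred_eq]
    refine ⟨n, Finset.mem_Ico.2 ⟨h0, h1⟩, k, Finset.mem_range.2 hk, ?_⟩
    rw [hix n _ h1 (by omega), hix n _ h1 (by omega), hix n _ h1 (by omega)]
    exact ⟨ha, hb⟩
  refine (measure_mono hsub).trans ?_
  refine transfer m hm P α hα hα2 f hfmeas hfLα X hXmeas hXstable t O hO _ fun N hN => ?_
  have := nu_prob α hα hα2 m hm N hN
  let A : ℕ → ℕ → Set (Fin N → ℝ × S) := fun n k =>
    {e | (∀ j, e j ∈ GG S r0) ∧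
      l n < |∑ j, hh α (e j).1 * (f (dy (n+1) (2*k+1)) (e j).2 - f (dy (n+1) (2*k)) (e j).2)| ∧
      l n < |∑ j, hh α (e j).1 * (f (dy (n+1) (2*k+2)) (e j).2 - f (dy (n+1) (2*k+1)) (e j).2)|}
  have hsub2 : {e : Fin N → ℝ × S | (fun i => ∑ j, hh α (e j).1 * f (t i) (e j).2) ∈ O} ⊆
      {e | ∃ j, e j ∈ (GG S r0)ᶜ} ∪ ⋃ n ∈ Finset.Ico n0 n1, ⋃ k ∈ Finset.range (2^n), A n k := by
    intro e he
    by_cases hg : ∀ j, e j ∈ GG S r0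
    · right
      simp only [O, Set.mem_iUnion, Set.mem_ofPred_eq] at he
      obtain ⟨n, hn, k, hk, ha, hb⟩ := he
      simp only [Set.mem_iUnion]
      refine ⟨n, hn, k, hk, hg, ?_, ?_⟩
      all_goals
        have h1 := (Finset.mem_Ico.1 hn).2
        have hk2 := Finset.mem_range.1 hk
        have h2 : 2^(n+1) = 2 * 2^n := by ring
        rw [hix n _ h1 (by omega), hix n _ h1 (by omega)] at ha hb
        rw [← Finset.sum_sub_distrib] at ha hb
        simp_rw [mul_sub]
      · exact ha
      · exact hb
    · left
      push Not at hg
      exact hg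
  refine (measure_mono hsub2).trans ((measure_union_le _ _).trans ?_)
  refine add_le_add (pi_exists_le _ _ N (nu_le α m N hN) (GG_meas r0).compl) ?_
  refine (measure_biUnion_finset_le _ _).trans (Finset.sum_le_sum fun n hn => ?_)
  refine (measure_biUnion_finset_le _ _).trans ?_
  have hk : ∀ k ∈ Finset.range (2^n), Measure.pi (fun _ : Fin N => nu α m N) (A n k) ≤
      ENNReal.ofReal (C * ((l n)^(-(2*p₁)) * (((C0/2) * (2:ℝ)^(-(n:ℝ)))^β₁)^2 +
        (l n)^(-(2*p₂)) * (C0 * (2:ℝ)^(-(n:ℝ)))^(2*β₂))) := by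
    intro k hk
    have hk2 := Finset.mem_range.1 hk
    have h2 : 2^(n+1) = 2 * 2^n := by ring
    have h2' : (2:ℝ)^(n+1) = 2 * 2^n := by ring
    have hpow : (2:ℝ)^(-(n:ℝ)) = (2^n)⁻¹ := by
      rw [Real.rpow_neg (by norm_num), Real.rpow_natCast]
    have p0 : (0:ℝ) < 2^n := by positivity
    have d1 : ((dy (n+1) (2*k+1) : unitInterval) : ℝ) - (dy (n+1) (2*k) : unitInterval) = 2⁻¹ * 2^(-(n:ℝ)) := by
      rw [dy_coe (by omega), dy_coe (by omega), hpow, h2']; push_cast; field_simp; ring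
    have d2 : ((dy (n+1) (2*k+2) : unitInterval) : ℝ) - (dy (n+1) (2*k+1) : unitInterval) = 2⁻¹ * 2^(-(n:ℝ)) := by
      rw [dy_coe (by omega), dy_coe (by omega), hpow, h2']; push_cast; field_simp; ring
    have d3 : ((dy (n+1) (2*k+2) : unitInterval) : ℝ) - (dy (n+1) (2*k) : unitInterval) = 2^(-(n:ℝ)) := by
      linarith
    have o1 := dy_le (n+1) (2*k) (2*k+1) (by omega) (by omega)
    have o2 := dy_le (n+1) (2*k+1) (2*k+2) (by omega) (by omega)
    refine hkey N hN (fun s => f (dy (n+1) (2*k+1)) s - f (dy (n+1) (2*k)) s)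
      (fun s => f (dy (n+1) (2*k+2)) s - f (dy (n+1) (2*k+1)) s)
      ((hfmeas _).sub (hfmeas _)) ((hfmeas _).sub (hfmeas _)) _ _ (l n) (by positivity)
      (by positivity) (hl n) ?_ ?_ ?_
    · have := hB1 _ _ o1
      rw [d1] at this
      convert this using 3; ring
    · have := hB1 _ _ o2
      rw [d2] at this
      convert this using 3; ring
    · have := hB2 _ _ _ o1 o2
      rw [d3] at this
      exact this
  refine (Finset.sum_le_sum hk).trans ?_
  rw [Finset.sum_const, Finset.card_range, nsmul_eq_mul]
  have : (((2^n : ℕ)) : ℝ≥0∞) = ENNReal.ofReal (2^n) := by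
    rw [← ENNReal.ofReal_natCast]; push_cast; rfl
  rw [this, ← ENNReal.ofReal_mul (by positivity)]
  refine ENNReal.ofReal_le_ofReal (le_of_eq ?_)
  have : (((C0/2) * (2:ℝ)^(-(n:ℝ)))^β₁)^2 = ((C0/2) * (2:ℝ)^(-(n:ℝ)))^(2*β₁) := by
    rw [← Real.rpow_natCast, ← Real.rpow_mul (by positivity)]; congr 1; push_cast; ring
  rw [this]; ring
lemma bc2 (m : Measure S) [IsFiniteMeasure m] (hm : m ≠ 0)
    {Ω : Type*} [MeasurableSpace Ω] (P : Measure Ω) [IsProbabilityMeasure P]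
    (α : ℝ) (hα : 0 < α) (hα2 : α < 2)
    (f : unitInterval → S → ℝ) (hfmeas : ∀ t, Measurable (f t))
    (hfLα : ∀ t, ∫⁻ s, ENNReal.ofReal (|f t s| ^ α) ∂m < ⊤)
    (X : Ω → unitInterval → ℝ) (hXmeas : ∀ t, Measurable fun ω => X ω t)
    (hXstable : ∀ (n : ℕ) (t : Fin n → unitInterval) (θ : Fin n → ℝ),
      ∫ ω, Complex.exp (Complex.I * ((∑ k, θ k * X ω (t k) : ℝ) : ℂ)) ∂P
        = Complex.exp (-(((∫ s, |∑ k, θ k * f (t k) s| ^ α ∂m : ℝ)) : ℂ)))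
    (β₁ β₂ p₁ p₂ : ℝ) (hβ₁ : 1/2 < β₁) (hβ₂ : 1/2 < β₂)
    (hp₁ : α < p₁) (hp₂ : α/2 < p₂) (C0 : ℝ) (hC0 : 0 < C0)
    (hB1 : ∀ t₁ t₂ : unitInterval, t₁ ≤ t₂ →
      ∫⁻ s, ENNReal.ofReal (|f t₂ s - f t₁ s| ^ p₁) ∂m
        ≤ ENNReal.ofReal ((C0 * ((t₂:ℝ) - t₁)) ^ β₁))
    (hB2 : ∀ t₁ t t₂ : unitInterval, t₁ ≤ t → t ≤ t₂ →
      ∫⁻ s, ENNReal.ofReal (|(f t s - f t₁ s) * (f t₂ s - f t s)| ^ p₂) ∂m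
        ≤ ENNReal.ofReal ((C0 * ((t₂:ℝ) - t₁)) ^ (2 * β₂))) :
    ∃ lam : ℕ → ℝ, (∀ n, 0 ≤ lam n) ∧ Summable lam ∧
      ∀ᵐ ω ∂P, ∃ n0, ∀ n, n0 ≤ n → ¬ badk (X ω) n (lam n) := by
  have hp1 : 0 < p₁ := hα.trans hp₁
  have hp2 : 0 < p₂ := (half_pos hα).trans hp₂
  obtain ⟨γ, hγ0, hγ⟩ : ∃ γ : ℝ, 0 < γ ∧ γ < min ((2*β₁-1)/(2*p₁)) ((2*β₂-1)/(2*p₂)) := by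
    refine exists_between (lt_min (div_pos (by linarith) (by linarith)) (div_pos (by linarith) (by linarith)))
  have g1 : 2*p₁*γ < 2*β₁-1 := by
    have := hγ.trans_le (min_le_left _ _)
    rw [lt_div_iff₀ (by positivity)] at this; linarith
  have g2 : 2*p₂*γ < 2*β₂-1 := by
    have := hγ.trans_le (min_le_right _ _)
    rw [lt_div_iff₀ (by positivity)] at this; linarith
  have hlp : ∀ n : ℕ, 0 < (2:ℝ)^(-γ*(n:ℝ)) := fun n => by positivity
  refine ⟨fun n => (2:ℝ)^(-γ*(n:ℝ)), fun n => (hlp n).le, ?_, ?_⟩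
  · have hr : (2:ℝ)^(-γ) < 1 := Real.rpow_lt_one_of_one_lt_of_neg (by norm_num) (by linarith)
    refine (summable_geometric_of_lt_one (by positivity) hr).congr fun n => ?_
    rw [← Real.rpow_natCast, ← Real.rpow_mul (by norm_num)]
  · rw [ae_iff]
    set E := {ω | ¬ ∃ n0, ∀ n, n0 ≤ n → ¬ badk (X ω) n ((2:ℝ)^(-γ*(n:ℝ)))} with hE
    have main : ∀ r0 : ℝ, 0 < r0 → P E ≤ (Kc α)⁻¹ * (ENNReal.ofReal (2*r0) * m univ) := by
      intro r0 hr0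
      obtain ⟨C, hC, hb⟩ := bc1 m hm P α hα hα2 f hfmeas hfLα X hXmeas hXstable β₁ β₂ p₁ p₂ hp₁ hp₂ C0 hC0
        hB1 hB2 r0 hr0
      replace hb := hb (fun n => (2:ℝ)^(-γ*(n:ℝ))) hlp
      set T : ℕ → ℝ := fun n => C * ((2:ℝ)^n * (((2:ℝ)^(-γ*(n:ℝ)))^(-(2*p₁)) *
          ((C0/2) * (2:ℝ)^(-(n:ℝ)))^(2*β₁)) +
          (2:ℝ)^n * (((2:ℝ)^(-γ*(n:ℝ)))^(-(2*p₂)) * (C0 * (2:ℝ)^(-(n:ℝ)))^(2*β₂))) with hT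
      have hTs : Summable T :=
        ((sumterm (C0/2) γ p₁ β₁ (by positivity) g1).add (sumterm C0 γ p₂ β₂ hC0 g2)).mul_left C
      have hT0 := ENNReal.tendsto_sum_nat_add (fun n => ENNReal.ofReal (T n)) hTs.tsum_ofReal_ne_top
      have h1 : ∀ n0, P E ≤ Lam α m (GG S r0)ᶜ + ∑' k, ENNReal.ofReal (T (k + n0)) := by
        intro n0
        have hs : E ⊆ ⋃ n1 : ℕ, {ω | ∃ n, n0 ≤ n ∧ n < n1 ∧ badk (X ω) n ((2:ℝ)^(-γ*(n:ℝ)))} := by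
          intro ω hω
          rw [hE, Set.mem_ofPred_eq] at hω
          push Not at hω
          obtain ⟨n, hn, hb⟩ := hω n0
          exact Set.mem_iUnion.2 ⟨n+1, n, hn, n.lt_succ_self, hb⟩
        refine (measure_mono hs).trans ?_
        rw [Monotone.measure_iUnion]
        · refine iSup_le fun n1 => (hb n0 n1).trans ?_
          gcongr
          rw [Finset.sum_Ico_eq_sum_range]
          simp_rw [add_comm n0]
          exact ENNReal.sum_le_tsum (f := fun k => ENNReal.ofReal (T (k + n0))) _
        · rintro a b hab ω ⟨n, h0, h1, h2⟩
          exact ⟨n, h0, h1.trans_le hab, h2⟩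
      have h2 : P E ≤ Lam α m (GG S r0)ᶜ + 0 :=
        ge_of_tendsto' (tendsto_const_nhds.add hT0) h1
      rw [add_zero] at h2
      exact h2.trans (Lam_bad α m r0)
    have hlim : Tendsto (fun r0 : ℝ => (Kc α)⁻¹ * (ENNReal.ofReal (2*r0) * m univ)) (𝓝[>] 0) (𝓝 ((Kc α)⁻¹ * (ENNReal.ofReal (2*0) * m univ))) := by
      refine ENNReal.Tendsto.const_mul ?_ (Or.inr (ENNReal.inv_ne_top.2 (Kc_pos α hα).ne'))
      refine ENNReal.Tendsto.mul_const ?_ (Or.inr (measure_ne_top _ _))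
      refine (ENNReal.continuous_ofReal.comp (by fun_prop : Continuous fun r : ℝ => 2*r)).continuousAt.tendsto.mono_left nhdsWithin_le_nhds
    have h3 := ge_of_tendsto hlim (eventually_nhdsWithin_of_forall main)
    simpa using h3

lemma ae_zero_of_char {Ω : Type*} [MeasurableSpace Ω] (P : Measure Ω) [IsProbabilityMeasure P]
    (Z : Ω → ℝ) (hZ : AEMeasurable Z P)
    (h : ∀ θ : ℝ, ∫ ω, Complex.exp (Complex.I * ((θ * Z ω : ℝ) : ℂ)) ∂P = 1) : ∀ᵐ ω ∂P, Z ω = 0 := by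
  have hp : IsProbabilityMeasure (P.map Z) := Measure.isProbabilityMeasure_map hZ
  have : P.map Z = Measure.dirac 0 := by
    refine Measure.ext_of_charFun (funext fun θ => ?_)
    rw [charFun_dirac, charFun_apply_real, integral_map hZ (by fun_prop)]
    simp only [inner_zero_left, Complex.ofReal_zero, zero_mul, Complex.exp_zero]
    rw [← h θ]
    refine integral_congr_ae (Eventually.of_forall fun ω => ?_)
    simp only
    push_cast
    rw [mul_comm]
  have h1 : (P.map Z) {0}ᶜ = 0 := by rw [this]; simp
  rw [Measure.map_apply_of_aemeasurable hZ (measurableSet_singleton _).compl] at h1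
  exact h1

lemma diff_zero (m : Measure S) [IsFiniteMeasure m]
    {Ω : Type*} [MeasurableSpace Ω] (P : Measure Ω) [IsProbabilityMeasure P]
    (α : ℝ) (hα : 0 < α)
    (f : unitInterval → S → ℝ) (hfmeas : ∀ t, Measurable (f t))
    (X : Ω → unitInterval → ℝ) (hXmeas : ∀ t, Measurable fun ω => X ω t)
    (hXstable : ∀ (n : ℕ) (t : Fin n → unitInterval) (θ : Fin n → ℝ),
      ∫ ω, Complex.exp (Complex.I * ((∑ k, θ k * X ω (t k) : ℝ) : ℂ)) ∂P
        = Complex.exp (-(((∫ s, |∑ k, θ k * f (t k) s| ^ α ∂m : ℝ)) : ℂ)))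
    (β₁ p₁ : ℝ) (hβ₁ : 1/2 < β₁)
    (hp₁ : α < p₁) (C0 : ℝ) (hC0 : 0 < C0)
    (hB1 : ∀ t₁ t₂ : unitInterval, t₁ ≤ t₂ →
      ∫⁻ s, ENNReal.ofReal (|f t₂ s - f t₁ s| ^ p₁) ∂m
        ≤ ENNReal.ofReal ((C0 * ((t₂:ℝ) - t₁)) ^ β₁))
    (t : unitInterval) (d : ℕ → unitInterval) (hd : ∀ k, t < d k) (hdt : Tendsto d atTop (𝓝 t))
    (y : Ω → ℝ) (hy : ∀ᵐ ω ∂P, Tendsto (fun k => X ω (d k)) atTop (𝓝 (y ω))) :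
    ∀ᵐ ω ∂P, y ω = X ω t := by
  have hym : AEMeasurable y P :=
    aemeasurable_of_tendsto_metrizable_ae atTop (fun k => (hXmeas (d k)).aemeasurable) hy
  have hz := ae_zero_of_char P (fun ω => y ω - X ω t) (hym.sub (hXmeas t).aemeasurable) ?_
  · filter_upwards [hz] with ω h
    linarith
  intro θ
  have hint : ∀ k, ∫ ω, Complex.exp (Complex.I * ((θ * (X ω (d k) - X ω t) : ℝ) : ℂ)) ∂P =
      Complex.exp (-(((∫ s, |θ * (f (d k) s - f t s)| ^ α ∂m : ℝ)) : ℂ)) := by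
    intro k
    have := hXstable 2 ![d k, t] ![θ, -θ]
    simp only [Fin.sum_univ_two, Matrix.cons_val_zero, Matrix.cons_val_one] at this
    convert this using 6 <;> ring_nf
  have hdt' : Tendsto (fun k => ((d k : ℝ) - t)) atTop (𝓝 0) := by
    have := (continuous_subtype_val.tendsto t).comp hdt
    simpa using this.sub_const (t:ℝ)
  have hmom : ∀ k, ∫⁻ s, ENNReal.ofReal (|f (d k) s - f t s|^α) ∂m ≤
      ENNReal.ofReal (((C0 * ((d k:ℝ) - t))^β₁)^(α/p₁)) * (m univ + 1) := by
    intro k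
    have : (t:ℝ) < d k := hd k
    exact momlow m _ ((hfmeas _).sub (hfmeas _)) α p₁ _ hα hp₁.le
      (Real.rpow_pos_of_pos (mul_pos hC0 (by linarith)) _) (hB1 t (d k) (hd k).le)
  have hmom0 : Tendsto (fun k => ENNReal.ofReal (((C0 * ((d k:ℝ) - t))^β₁)^(α/p₁)) * (m univ + 1)) atTop (𝓝 0) := by
    have e : Tendsto (fun k => ((C0 * ((d k:ℝ) - t))^β₁)^(α/p₁)) atTop (𝓝 0) := by
      have h1 : Tendsto (fun k => C0 * ((d k:ℝ) - t)) atTop (𝓝 0) := by simpa using hdt'.const_mul C0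
      have h2 := h1.rpow_const (p := β₁) (Or.inr (by linarith))
      rw [Real.zero_rpow (by linarith)] at h2
      have hap : 0 < α/p₁ := div_pos hα (hα.trans hp₁)
      have h3 := h2.rpow_const (p := α/p₁) (Or.inr hap.le)
      rwa [Real.zero_rpow hap.ne'] at h3
    have := ENNReal.Tendsto.mul_const (b := m univ + 1) (ENNReal.tendsto_ofReal e)
      (Or.inr (by simp))
    simpa using this
  have hlim0 := tendsto_of_tendsto_of_tendsto_of_le_of_le tendsto_const_nhds hmom0 (fun k => bot_le) hmom
  have hre : ∀ k, ∫ s, |θ * (f (d k) s - f t s)| ^ α ∂m =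
      |θ|^α * (∫⁻ s, ENNReal.ofReal (|f (d k) s - f t s|^α) ∂m).toReal := by
    intro k
    rw [← integral_eq_lintegral_of_nonneg_ae (Eventually.of_forall fun s => by positivity)
      (by have := hfmeas (d k); have := hfmeas t; exact Measurable.aestronglyMeasurable (by fun_prop)),
      ← integral_const_mul]
    refine integral_congr_ae (Eventually.of_forall fun s => ?_)
    simp only
    rw [abs_mul, Real.mul_rpow (abs_nonneg _) (abs_nonneg _)]
  have hlim1 : Tendsto (fun k => ∫ s, |θ * (f (d k) s - f t s)| ^ α ∂m) atTop (𝓝 0) := by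
    simp_rw [hre]
    have := ((ENNReal.tendsto_toReal ENNReal.zero_ne_top).comp hlim0).const_mul (|θ|^α)
    simpa using this
  have L1 : Tendsto (fun k => ∫ ω, Complex.exp (Complex.I * ((θ * (X ω (d k) - X ω t) : ℝ) : ℂ)) ∂P)
      atTop (𝓝 1) := by
    simp_rw [hint]
    have hc : Continuous fun r : ℝ => Complex.exp (-(r:ℂ)) := by fun_prop
    have h0 := (hc.tendsto 0).comp hlim1
    rw [Complex.ofReal_zero, neg_zero, Complex.exp_zero] at h0
    exact h0
  have L2 : Tendsto (fun k => ∫ ω, Complex.exp (Complex.I * ((θ * (X ω (d k) - X ω t) : ℝ) : ℂ)) ∂P)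
      atTop (𝓝 (∫ ω, Complex.exp (Complex.I * ((θ * (y ω - X ω t) : ℝ) : ℂ)) ∂P)) := by
    refine tendsto_integral_of_dominated_convergence (fun _ => 1) (fun k => ?_) (integrable_const _)
      (fun k => Eventually.of_forall fun ω => ?_) ?_
    · have := hXmeas (d k); have := hXmeas t
      exact Measurable.aestronglyMeasurable (by fun_prop)
    · rw [mul_comm, Complex.norm_exp_ofReal_mul_I]
    · filter_upwards [hy] with ω h
      have hc : Continuous fun r : ℝ => Complex.exp (Complex.I * ((θ * (r - X ω t) : ℝ) : ℂ)) := by fun_prop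
      exact (hc.tendsto (y ω)).comp h
  exact tendsto_nhds_unique L2 L1

lemma cadlag_zero : Cadlag (fun _ : unitInterval => (0:ℝ)) :=
  ⟨fun _ => tendsto_const_nhds, fun _ => ⟨0, tendsto_const_nhds⟩⟩

lemma lip_thm (m : Measure S) [IsFiniteMeasure m] (hm : m ≠ 0)
    {Ω : Type*} [MeasurableSpace Ω] (P : Measure Ω) [IsProbabilityMeasure P]
    (α : ℝ) (hα : 0 < α) (hα2 : α < 2)
    (f : unitInterval → S → ℝ) (hfmeas : ∀ t, Measurable (f t))
    (hfLα : ∀ t, ∫⁻ s, ENNReal.ofReal (|f t s| ^ α) ∂m < ⊤)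
    (X : Ω → unitInterval → ℝ) (hXmeas : ∀ t, Measurable fun ω => X ω t)
    (hXstable : ∀ (n : ℕ) (t : Fin n → unitInterval) (θ : Fin n → ℝ),
      ∫ ω, Complex.exp (Complex.I * ((∑ k, θ k * X ω (t k) : ℝ) : ℂ)) ∂P
        = Complex.exp (-(((∫ s, |∑ k, θ k * f (t k) s| ^ α ∂m : ℝ)) : ℂ)))
    (β₁ β₂ p₁ p₂ : ℝ) (hβ₁ : 1/2 < β₁) (hβ₂ : 1/2 < β₂)
    (hp₁ : α < p₁) (hp₂ : α/2 < p₂) (C0 : ℝ) (hC0 : 0 < C0)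
    (hB1 : ∀ t₁ t₂ : unitInterval, t₁ ≤ t₂ →
      ∫⁻ s, ENNReal.ofReal (|f t₂ s - f t₁ s| ^ p₁) ∂m
        ≤ ENNReal.ofReal ((C0 * ((t₂:ℝ) - t₁)) ^ β₁))
    (hB2 : ∀ t₁ t t₂ : unitInterval, t₁ ≤ t → t ≤ t₂ →
      ∫⁻ s, ENNReal.ofReal (|(f t s - f t₁ s) * (f t₂ s - f t s)| ^ p₂) ∂m
        ≤ ENNReal.ofReal ((C0 * ((t₂:ℝ) - t₁)) ^ (2 * β₂))) :
    ∃ X' : Ω → unitInterval → ℝ,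
      (∀ ω, Cadlag (X' ω)) ∧ ∀ t : unitInterval, ∀ᵐ ω ∂P, X' ω t = X ω t := by
  obtain ⟨lam, hl0, hls, hae⟩ := bc2 m hm P α hα hα2 f hfmeas hfLα X hXmeas hXstable β₁ β₂ p₁ p₂ hβ₁ hβ₂
    hp₁ hp₂ C0 hC0 hB1 hB2
  have hex : ∀ ω, ∃ y : unitInterval → ℝ, Cadlag y ∧ ((∃ n0, ∀ n, n0 ≤ n → ¬ badk (X ω) n (lam n)) →
      y 1 = X ω 1 ∧ ∀ t < 1, Tendsto (X ω) (𝓝[dyD ∩ Ioi t] t) (𝓝 (y t))) := by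
    intro ω
    by_cases h : ∃ n0, ∀ n, n0 ≤ n → ¬ badk (X ω) n (lam n)
    · obtain ⟨n0, hn0⟩ := h
      obtain ⟨y, hy, h1, h2⟩ := cadlag_ext (X ω) lam hl0 hls n0 (by
        intro n hn k
        by_cases hk : k < 2^n
        · by_contra hcon
          push Not at hcon
          exact hn0 n hn ⟨k, hk, hcon.1, hcon.2⟩
        · left
          have h2 : 2^(n+1) = 2 * 2^n := by ring
          rw [dy_top (by omega : 2^(n+1) ≤ 2*k+1), dy_top (by omega : 2^(n+1) ≤ 2*k)]
          simpa using hl0 n)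
      exact ⟨y, hy, fun _ => ⟨h1, h2⟩⟩
    · exact ⟨_, cadlag_zero, fun h' => absurd h' h⟩
  choose X' hX' hX'2 using hex
  refine ⟨X', hX', fun t => ?_⟩
  rcases eq_or_lt_of_le (unitInterval.le_one' (t := t)) with rfl | ht
  · filter_upwards [hae] with ω h
    exact (hX'2 ω h).1
  · have := dyD_neBot ht
    obtain ⟨d, hd⟩ := exists_seq_tendsto (𝓝[dyD ∩ Ioi t] t)
    have hd2 := tendsto_nhdsWithin_iff.1 hd
    obtain ⟨K, hK⟩ := eventually_atTop.1 hd2.2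
    refine diff_zero m P α hα f hfmeas X hXmeas hXstable β₁ p₁ hβ₁ hp₁ C0 hC0 hB1 t (fun k => d (k + K))
      (fun k => (hK (k+K) (by omega)).2) ((tendsto_add_atTop_iff_nat K).2 hd2.1) (fun ω => X' ω t) ?_
    filter_upwards [hae] with ω h
    exact ((hX'2 ω h).2 t ht).comp ((tendsto_add_atTop_iff_nat K).2 hd)

end Fin5
lemma cadlag_comp (φ : unitInterval ≃o unitInterval) (y : unitInterval → ℝ) (hy : Cadlag y) :
    Cadlag (fun t => y (φ t)) := by
  have hc : Continuous φ := φ.continuous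
  refine ⟨fun t => ?_, fun t => ?_⟩
  · refine (hy.1 (φ t)).comp (tendsto_nhdsWithin_iff.2 ⟨(hc.tendsto t).mono_left nhdsWithin_le_nhds, ?_⟩)
    exact eventually_nhdsWithin_of_forall fun s hs => φ.strictMono hs
  · obtain ⟨l, hl⟩ := hy.2 (φ t)
    refine ⟨l, hl.comp (tendsto_nhdsWithin_iff.2 ⟨(hc.tendsto t).mono_left nhdsWithin_le_nhds, ?_⟩)⟩
    exact eventually_nhdsWithin_of_forall fun s hs => φ.strictMono hs

lemma time_change (F₁ F₂ : unitInterval → ℝ)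
    (hF₁ : Monotone F₁) (hF₁c : Continuous F₁) (hF₂ : Monotone F₂) (hF₂c : Continuous F₂) :
    ∃ (C0 : ℝ) (ψ : unitInterval ≃o unitInterval), 0 < C0 ∧
      ∀ a b : unitInterval, a ≤ b → F₁ b - F₁ a ≤ C0 * ((ψ b : ℝ) - ψ a) ∧
        F₂ b - F₂ a ≤ C0 * ((ψ b : ℝ) - ψ a) := by
  let G : unitInterval → ℝ := fun t => F₁ t + F₂ t + t
  have hG : StrictMono G := by
    intro a b hab
    have h1 := hF₁ hab.le
    have h2 := hF₂ hab.le
    have h3 : (a:ℝ) < b := hab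
    simp only [G]; linarith
  have hGc : Continuous G := by fun_prop
  have hpos : 0 < G 1 - G 0 := sub_pos.2 (hG (by norm_num))
  let g : unitInterval → unitInterval := fun t => ⟨(G t - G 0)/(G 1 - G 0), by
    have h0 : G 0 ≤ G t := hG.monotone unitInterval.nonneg'
    have h1 : G t ≤ G 1 := hG.monotone unitInterval.le_one'
    constructor
    · exact div_nonneg (by linarith) hpos.le
    · rw [div_le_one hpos]; linarith⟩
  have hg : StrictMono g := by
    intro a b hab
    rw [← Subtype.coe_lt_coe]
    simp only [g]
    have := hG hab
    gcongr
  have hgc : Continuous g := by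
    refine Continuous.subtype_mk ?_ _
    fun_prop
  have hg0 : g 0 = 0 := by ext; simp [g]
  have hg1 : g 1 = 1 := by ext; simp [g, hpos.ne']
  have hsurj : Function.Surjective g := by
    intro y
    have := mem_range_of_exists_le_of_exists_ge hgc ⟨0, by rw [hg0]; exact unitInterval.nonneg'⟩
      ⟨1, by rw [hg1]; exact unitInterval.le_one'⟩ (c := y)
    exact this
  refine ⟨G 1 - G 0, StrictMono.orderIsoOfSurjective g hg hsurj, hpos, fun a b hab => ?_⟩
  have e : ∀ t, ((StrictMono.orderIsoOfSurjective g hg hsurj t : unitInterval) : ℝ) = (G t - G 0)/(G 1 - G 0) :=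
    fun t => rfl
  have : (G 1 - G 0) * (((StrictMono.orderIsoOfSurjective g hg hsurj b : unitInterval) : ℝ) -
      (StrictMono.orderIsoOfSurjective g hg hsurj a : unitInterval)) = G b - G a := by
    rw [e, e]; field_simp; ring
  rw [this]
  have h1 := hF₁ hab
  have h2 := hF₂ hab
  have h3 : (a:ℝ) ≤ b := hab
  simp only [G]
  constructor <;> linarith

/-- **Theorem 3 (càdlàg modifications of symmetric stable processes).** Let `α ∈ (1,2)` and
let `X` be a symmetric `α`-stable process with spectral representation `(f,m)`. If there
are `β₁, β₂ > 1/2`, `p₁ > α`, `p₂ > α/2` and increasing continuous `F₁, F₂` such that for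
all `t₁ ≤ t ≤ t₂` in `[0,1]`,
`∫ |f(t₂,s) − f(t₁,s)|^{p₁} dm ≤ |F₁ t₂ − F₁ t₁|^{β₁}` and
`∫ |(f(t,s) − f(t₁,s))(f(t₂,s) − f(t,s))|^{p₂} dm ≤ |F₂ t₂ − F₂ t₁|^{2β₂}`,
then `X` has a modification all of whose sample paths are càdlàg. -/
theorem stable_cadlag_modification
    {S : Type*} [MeasurableSpace S] (m : Measure S) [IsFiniteMeasure m]
    {Ω : Type*} [MeasurableSpace Ω] (P : Measure Ω) [IsProbabilityMeasure P]
    (α : ℝ) (hα1 : 1 < α) (hα2 : α < 2)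
    -- the spectral kernel `f`, with `f(t,·) ∈ L^α(S,m)`
    (f : unitInterval → S → ℝ)
    (hfmeas : ∀ t, Measurable (f t))
    (hfLα : ∀ t, ∫⁻ s, ENNReal.ofReal (|f t s| ^ α) ∂m < ⊤)
    -- the symmetric `α`-stable process `X` with spectral representation `(f,m)`
    (X : Ω → unitInterval → ℝ)
    (hXmeas : ∀ t, Measurable fun ω => X ω t)
    (hXstable : ∀ (n : ℕ) (t : Fin n → unitInterval) (θ : Fin n → ℝ),
      ∫ ω, Complex.exp (Complex.I * ((∑ k, θ k * X ω (t k) : ℝ) : ℂ)) ∂P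
        = Complex.exp (-(((∫ s, |∑ k, θ k * f (t k) s| ^ α ∂m : ℝ)) : ℂ)))
    -- the regularity assumptions
    (β₁ β₂ p₁ p₂ : ℝ) (hβ₁ : 1/2 < β₁) (hβ₂ : 1/2 < β₂)
    (hp₁ : α < p₁) (hp₂ : α/2 < p₂)
    (F₁ F₂ : unitInterval → ℝ)
    (hF₁ : Monotone F₁) (hF₁c : Continuous F₁)
    (hF₂ : Monotone F₂) (hF₂c : Continuous F₂)
    (hB1 : ∀ t₁ t₂ : unitInterval, t₁ ≤ t₂ →
      ∫⁻ s, ENNReal.ofReal (|f t₂ s - f t₁ s| ^ p₁) ∂m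
        ≤ ENNReal.ofReal (|F₁ t₂ - F₁ t₁| ^ β₁))
    (hB2 : ∀ t₁ t t₂ : unitInterval, t₁ ≤ t → t ≤ t₂ →
      ∫⁻ s, ENNReal.ofReal (|(f t s - f t₁ s) * (f t₂ s - f t s)| ^ p₂) ∂m
        ≤ ENNReal.ofReal (|F₂ t₂ - F₂ t₁| ^ (2 * β₂))) :
    ∃ X' : Ω → unitInterval → ℝ,
      (∀ ω, Cadlag (X' ω)) ∧ ∀ t : unitInterval, ∀ᵐ ω ∂P, X' ω t = X ω t := by
  have hα : 0 < α := by linarith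
  rcases eq_or_ne m 0 with rfl | hm
  · refine ⟨fun _ _ => 0, fun _ => cadlag_zero, fun t => ?_⟩
    have := ae_zero_of_char P (fun ω => X ω t) (hXmeas t).aemeasurable (fun θ => by
      have := hXstable 1 (fun _ => t) (fun _ => θ)
      simpa using this)
    filter_upwards [this] with ω h
    exact h.symm
  obtain ⟨C0, ψ, hC0, hψ⟩ := time_change F₁ F₂ hF₁ hF₁c hF₂ hF₂c
  obtain ⟨Y, hY, hYX⟩ := lip_thm m hm P α hα hα2 (fun t => f (ψ.symm t)) (fun t => hfmeas _)
    (fun t => hfLα _) (fun ω t => X ω (ψ.symm t)) (fun t => hXmeas _)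
    (fun n t θ => hXstable n (fun k => ψ.symm (t k)) θ) β₁ β₂ p₁ p₂ hβ₁ hβ₂ hp₁ hp₂ C0 hC0
    (fun a b hab => by
      have hab' := ψ.symm.monotone hab
      refine (hB1 _ _ hab').trans (ENNReal.ofReal_le_ofReal ?_)
      have h1 := hF₁ hab'
      rw [abs_of_nonneg (by linarith)]
      have h2 := (hψ _ _ hab').1
      rw [OrderIso.apply_symm_apply, OrderIso.apply_symm_apply] at h2
      exact Real.rpow_le_rpow (by linarith) h2 (by linarith))
    (fun a t b hat htb => by
      have hab' := ψ.symm.monotone (hat.trans htb)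
      refine (hB2 _ _ _ (ψ.symm.monotone hat) (ψ.symm.monotone htb)).trans (ENNReal.ofReal_le_ofReal ?_)
      have h1 := hF₂ hab'
      rw [abs_of_nonneg (by linarith)]
      have h2 := (hψ _ _ hab').2
      rw [OrderIso.apply_symm_apply, OrderIso.apply_symm_apply] at h2
      exact Real.rpow_le_rpow (by linarith) h2 (by linarith))
  refine ⟨fun ω t => Y ω (ψ t), fun ω => cadlag_comp ψ _ (hY ω), fun t => ?_⟩
  have := hYX (ψ t)
  filter_upwards [this] with ω h
  rw [h, OrderIso.symm_apply_apply]

end
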